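/- arXiv:1304.7216 — 4 statements merged into one kernel-verified Lean document; each statement's English description precedes it below -/
import Mathlib

section
/- Let G be an infinite, connected, locally finite, quasi-transitive simple graph. Then there exists a real number μ with 1 ≤ μ < ∞ such that for every vertex v of G, σ_n(v)^{1/n} → μ as n → ∞. -/
open Filter

/-- The number of `n`-step self-avoiding walks in `G` starting at `v`:
walks of length `n` from `v` (to an arbitrary endpoint) all of whose vertices are distinct. -/
noncomputable def sawCount {V : Type*} (G : SimpleGraph V) (v : V) (n : ℕ) : ℕ :=
  Nat.card {p : Σ w : V, G.Walk v w // p.2.IsPath ∧ p.2.length = n}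

/-! Cutting a self-avoiding walk from `v` after `m` steps gives
`σ_{m+n}(v) ≤ σ_m(v) · max_u σ_n(u)`. Let `μ` be the infimum of all `R` such that
`σ_n(v) ≤ C R^n` uniformly in `v` and `n`; it bounds all the growth rates from above. If every `w`
had some `m ≥ 1` with `σ_m(w) < μ^m`, then, there being only finitely many orbits, cutting walks
repeatedly would yield a uniform bound with some `R < μ`. So one vertex `w` satisfies
`σ_m(w) ≥ μ^m` for all `m ≥ 1`, and at `w` the limit is `μ`.

The limit passes from `u` to a neighbour `v`: a walk from `u` either avoids `v`, and can be
extended backwards to `v`, or visits `v`, and splits there into two walks from `v`. For walks of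
length `2m` one of the walks from `v` has length at least `m`, so for every `R > μ` there are
constants with `σ_{2m}(u) ≤ (a m + b) R^m σ_m(v)`. The left side grows like `μ^{2m}`, so the growth
rate at `v` is at least `μ²/R`. -/

open Finset.HasAntidiagonal
open scoped Topology

section Roots

theorem tendsto_const_mul_pow_rpow_one_div {c r : ℝ} (hc : 0 < c) (hr : 0 ≤ r) :
    Tendsto (fun n : ℕ => (c * r ^ n) ^ ((1 : ℝ) / n)) atTop (𝓝 r) := by
  have hroot : Tendsto (fun n : ℕ => c ^ ((1 : ℝ) / n) * r) atTop (𝓝 r) := by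
    simpa using ((tendsto_const_nhds (x := c)).rpow
      (tendsto_one_div_atTop_nhds_zero_nat (𝕜 := ℝ)) (Or.inl hc.ne')).mul_const r
  refine hroot.congr' ?_
  filter_upwards [eventually_ne_atTop 0] with n hn
  rw [Real.mul_rpow hc.le (by positivity), one_div, Real.pow_rpow_inv_natCast hr hn]

theorem tendsto_linear_rpow_one_div {a : ℝ} (ha : 0 < a) (b : ℝ) :
    Tendsto (fun n : ℕ => (a * n + b) ^ ((1 : ℝ) / n)) atTop (𝓝 1) := by
  have hlin : Tendsto (fun n : ℕ => a * n + b) atTop atTop :=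
    tendsto_atTop_add_const_right _ _ (tendsto_natCast_atTop_atTop.const_mul_atTop ha)
  refine ((tendsto_rpow_div_mul_add 1 (1 / a) (-b / a) (by positivity)).comp hlin).congr
    fun n => ?_
  have hn : 1 / a * (a * n + b) + -b / a = n := by field_simp; ring
  simp only [Function.comp_apply, hn]

theorem eventually_rpow_one_div_lt {x : ℕ → ℝ} {C R b : ℝ} (hx : ∀ n, 0 ≤ x n) (hC : 0 < C)
    (hR : 0 ≤ R) (hxC : ∀ n, x n ≤ C * R ^ n) (hb : R < b) :
    ∀ᶠ n : ℕ in atTop, x n ^ ((1 : ℝ) / n) < b := by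
  filter_upwards [(tendsto_const_mul_pow_rpow_one_div hC hR).eventually_lt_const hb] with n hn
  exact (Real.rpow_le_rpow (hx n) (hxC n) (by positivity)).trans_lt hn

theorem eventually_lt_rpow_one_div_of_two_mul_le {x y : ℕ → ℝ} {μ R a b c : ℝ}
    (hx : ∀ n, 0 ≤ x n) (hy : ∀ n, 0 ≤ y n) (hR : 0 < R) (ha : 0 < a) (hb : 0 ≤ b)
    (hμ : Tendsto (fun n : ℕ => x n ^ ((1 : ℝ) / n)) atTop (𝓝 μ))
    (hxy : ∀ m : ℕ, x (2 * m) ≤ (a * m + b) * R ^ m * y m) (hc : c < μ ^ 2 / R) :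
    ∀ᶠ m : ℕ in atTop, c < y m ^ ((1 : ℝ) / m) := by
  have htwo : Tendsto (fun m : ℕ => 2 * m) atTop atTop := tendsto_id.const_mul_atTop' two_pos
  have hquot := ((hμ.comp htwo).pow 2).div
    ((tendsto_linear_rpow_one_div ha b).mul_const R) (by positivity)
  rw [one_mul] at hquot
  filter_upwards [hquot.eventually_const_lt hc, eventually_gt_atTop 0] with m hcm hm
  refine hcm.trans_le ?_
  have hsq : (x (2 * m) ^ ((1 : ℝ) / (2 * m : ℕ))) ^ 2 = x (2 * m) ^ ((1 : ℝ) / m) := by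
    rw [← Real.rpow_mul_natCast (hx _)]
    congr 1
    push_cast
    field_simp
  have hroot : x (2 * m) ^ ((1 : ℝ) / m) ≤
      y m ^ ((1 : ℝ) / m) * ((a * m + b) ^ ((1 : ℝ) / m) * R) :=
    calc x (2 * m) ^ ((1 : ℝ) / m)
        ≤ ((a * m + b) * R ^ m * y m) ^ ((1 : ℝ) / m) :=
          Real.rpow_le_rpow (hx _) (hxy m) (by positivity)
      _ = (a * m + b) ^ ((1 : ℝ) / m) * (R ^ m) ^ ((1 : ℝ) / m) * y m ^ ((1 : ℝ) / m) := by
          rw [Real.mul_rpow (by positivity) (hy m), Real.mul_rpow (by positivity) (by positivity)]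
      _ = (a * m + b) ^ ((1 : ℝ) / m) * R * y m ^ ((1 : ℝ) / m) := by
          rw [one_div, Real.pow_rpow_inv_natCast hR.le hm.ne']
      _ = y m ^ ((1 : ℝ) / m) * ((a * m + b) ^ ((1 : ℝ) / m) * R) := mul_comm _ _
  simp only [Pi.div_apply, Function.comp_apply, hsq]
  exact div_le_of_le_mul₀ (by positivity) (Real.rpow_nonneg (hy m) _) hroot

end Roots

section GrowthRate

variable {ι : Type*} {f : ι → ℕ → ℝ}

/-- The family of sequences `f` satisfies `f i (m + n) ≤ f i m * sup_j f j n`; the supremum is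
replaced by an arbitrary upper bound, so that nothing is claimed where it is infinite. -/
def UniformlySubmultiplicative (f : ι → ℕ → ℝ) : Prop :=
  ∀ ⦃n : ℕ⦄ ⦃B : ℝ⦄, (∀ j, f j n ≤ B) → ∀ i m, f i (m + n) ≤ f i m * B

/-- `R` is a uniform exponential growth bound: `f i n = O(R ^ n)` uniformly in `i`. -/
def IsGrowthBound (f : ι → ℕ → ℝ) (R : ℝ) : Prop :=
  0 < R ∧ ∃ C > 0, ∀ i n, f i n ≤ C * R ^ n

/-- The uniform exponential growth rate of a family of sequences (zero if there is no growth
bound). For the family `v ↦ σ_n(v)` of a quasi-transitive graph it is the connective constant. -/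
noncomputable def growthRate (f : ι → ℕ → ℝ) : ℝ :=
  sInf {R | IsGrowthBound f R}

theorem bddBelow_setOf_isGrowthBound (f : ι → ℕ → ℝ) : BddBelow {R | IsGrowthBound f R} :=
  ⟨0, fun _ hR => hR.1.le⟩

theorem IsGrowthBound.of_growthRate_lt {R : ℝ} (hne : ∃ R, IsGrowthBound f R)
    (hR : growthRate f < R) : IsGrowthBound f R := by
  obtain ⟨R', ⟨hR'0, C, hC, hfC⟩, hR'R⟩ := exists_lt_of_csInf_lt hne hR
  exact ⟨hR'0.trans hR'R, C, hC, fun i n => (hfC i n).trans (by gcongr)⟩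

theorem IsGrowthBound.one_le {R : ℝ} (hR : IsGrowthBound f R) {i : ι} (hf : ∀ n, 1 ≤ f i n) :
    1 ≤ R := by
  obtain ⟨hR0, C, -, hfC⟩ := hR
  by_contra! hR1
  have hlim : Tendsto (fun n => C * R ^ n) atTop (𝓝 0) := by
    simpa using (tendsto_pow_atTop_nhds_zero_of_lt_one hR0.le hR1).const_mul C
  obtain ⟨n, hn⟩ := (hlim.eventually_lt_const one_pos).exists
  exact hn.not_ge ((hf n).trans (hfC i n))

theorem one_le_growthRate (hne : ∃ R, IsGrowthBound f R) {i : ι} (hf : ∀ n, 1 ≤ f i n) :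
    1 ≤ growthRate f :=
  le_csInf hne fun _ hR => hR.one_le hf

theorem eventually_forall_of_finite_range {α : Type*} {l : Filter α} {p : (ℕ → ℝ) → α → Prop}
    (hfin : (Set.range f).Finite) (hp : ∀ i, ∀ᶠ x in l, p (f i) x) :
    ∀ᶠ x in l, ∀ i, p (f i) x := by
  simpa only [Set.forall_mem_range] using
    (eventually_all_finite hfin).2 (Set.forall_mem_range.2 hp)

theorem UniformlySubmultiplicative.isGrowthBound (hsub : UniformlySubmultiplicative f)
    (hfin : (Set.range f).Finite) {R : ℝ} (hR : 0 < R)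
    (hfR : ∀ i, ∃ m ≥ 1, f i m ≤ R ^ m) : IsGrowthBound f R := by
  obtain ⟨N, hN⟩ : ∃ N : ℕ, ∀ i, ∃ m ≥ 1, m ≤ N ∧ f i m ≤ R ^ m := by
    refine (eventually_forall_of_finite_range (l := atTop)
      (p := fun x N => ∃ m ≥ 1, m ≤ N ∧ x m ≤ R ^ m) hfin fun i => ?_).exists
    obtain ⟨m, hm1, hm⟩ := hfR i
    filter_upwards [eventually_ge_atTop m] with N hmN using ⟨m, hm1, hmN, hm⟩
  obtain ⟨C, hCN, hC⟩ : ∃ C : ℝ, (∀ i, ∀ n < N, f i n ≤ C * R ^ n) ∧ 0 < C := by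
    refine ((eventually_forall_of_finite_range
      (p := fun x C => ∀ n < N, x n ≤ C * R ^ n) hfin fun i => ?_).and
      (eventually_gt_atTop 0)).exists
    refine (eventually_all_finite (Set.finite_lt_nat N)).2 fun n _ => ?_
    filter_upwards [eventually_ge_atTop (f i n / R ^ n)] with C hC
    exact (div_le_iff₀ (by positivity)).1 hC
  refine ⟨hR, C, hC, fun i n => ?_⟩
  induction n using Nat.strong_induction_on generalizing i with
  | _ n ih =>
    rcases lt_or_ge n N with hn | hn
    · exact hCN i n hn
    obtain ⟨m, hm1, hmN, hm⟩ := hN i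
    obtain ⟨k, rfl⟩ := Nat.exists_eq_add_of_le (hmN.trans hn)
    calc f i (m + k) ≤ f i m * (C * R ^ k) := hsub (fun j => ih k (by omega) j) i m
      _ ≤ R ^ m * (C * R ^ k) := by gcongr
      _ = C * R ^ (m + k) := by ring

theorem UniformlySubmultiplicative.exists_isGrowthBound (hsub : UniformlySubmultiplicative f)
    (hfin : (Set.range f).Finite) : ∃ R, IsGrowthBound f R := by
  obtain ⟨R, hfR, hR⟩ : ∃ R : ℝ, (∀ i, f i 1 ≤ R) ∧ 0 < R :=
    ((eventually_forall_of_finite_range (p := fun x R => x 1 ≤ R) hfin fun i =>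
      eventually_ge_atTop (f i 1)).and (eventually_gt_atTop 0)).exists
  exact ⟨R, hsub.isGrowthBound hfin hR fun i => ⟨1, le_rfl, by simpa using hfR i⟩⟩

theorem UniformlySubmultiplicative.exists_growthRate_pow_le (hsub : UniformlySubmultiplicative f)
    (hfin : (Set.range f).Finite) (hpos : 0 < growthRate f) :
    ∃ i, ∀ m ≥ 1, growthRate f ^ m ≤ f i m := by
  by_contra! hlt
  have hev : ∀ᶠ R in 𝓝[<] growthRate f, ∀ i, ∃ m ≥ 1, f i m ≤ R ^ m := by
    refine eventually_forall_of_finite_range (p := fun x R => ∃ m ≥ 1, x m ≤ R ^ m) hfin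
      fun i => ?_
    obtain ⟨m, hm1, hm⟩ := hlt i
    filter_upwards [(((continuous_pow m).tendsto _).mono_left
      nhdsWithin_le_nhds).eventually_const_lt hm] with R hR
    exact ⟨m, hm1, hR.le⟩
  obtain ⟨R, ⟨hfR, hR0⟩, hRlt⟩ := ((hev.and
    (nhdsWithin_le_nhds (eventually_gt_nhds hpos))).and self_mem_nhdsWithin).exists
  exact (csInf_le (bddBelow_setOf_isGrowthBound f)
    (hsub.isGrowthBound hfin hR0 hfR)).not_gt hRlt

theorem eventually_rpow_one_div_lt_of_growthRate_lt {b : ℝ} (h0 : ∀ i n, 0 ≤ f i n)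
    (hne : ∃ R, IsGrowthBound f R) (hb : growthRate f < b) (i : ι) :
    ∀ᶠ n : ℕ in atTop, f i n ^ ((1 : ℝ) / n) < b := by
  obtain ⟨R, hR, hRb⟩ := exists_between hb
  obtain ⟨hR0, C, hC, hfC⟩ := IsGrowthBound.of_growthRate_lt hne hR
  exact eventually_rpow_one_div_lt (h0 i) hC hR0.le (hfC i) hRb

theorem UniformlySubmultiplicative.exists_tendsto_growthRate
    (hsub : UniformlySubmultiplicative f) (h0 : ∀ i n, 0 ≤ f i n) (hfin : (Set.range f).Finite)
    (hpos : 0 < growthRate f) :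
    ∃ i, Tendsto (fun n : ℕ => f i n ^ ((1 : ℝ) / n)) atTop (𝓝 (growthRate f)) := by
  obtain ⟨i, hi⟩ := hsub.exists_growthRate_pow_le hfin hpos
  refine ⟨i, tendsto_order.2 ⟨fun a ha => ?_, fun b hb =>
    eventually_rpow_one_div_lt_of_growthRate_lt h0 (hsub.exists_isGrowthBound hfin) hb i⟩⟩
  filter_upwards [eventually_ge_atTop 1] with n hn
  calc a < growthRate f := ha
    _ = (growthRate f ^ n) ^ ((1 : ℝ) / n) := by
        rw [one_div, Real.pow_rpow_inv_natCast hpos.le (by omega)]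
    _ ≤ f i n ^ ((1 : ℝ) / n) := Real.rpow_le_rpow (by positivity) (hi n hn) (by positivity)

theorem UniformlySubmultiplicative.mul_le_of_add_eq_two_mul (hsub : UniformlySubmultiplicative f)
    (h0 : ∀ i n, 0 ≤ f i n) {C R : ℝ} (hC : 0 ≤ C) (hR : 0 ≤ R)
    (hfC : ∀ i n, f i n ≤ C * R ^ n) (i : ι) {k l m : ℕ} (hkl : k + l = 2 * m) :
    f i k * f i l ≤ C ^ 2 * R ^ m * f i m := by
  wlog hmk : m ≤ k generalizing k l
  · rw [mul_comm (f i k)]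
    exact this (by omega) (by omega)
  obtain ⟨j, rfl⟩ := Nat.exists_eq_add_of_le hmk
  obtain rfl : m = j + l := by omega
  calc f i (j + l + j) * f i l ≤ f i (j + l) * (C * R ^ j) * (C * R ^ l) :=
        mul_le_mul (hsub (fun i => hfC i j) i _) (hfC i l) (h0 i l)
          (mul_nonneg (h0 i _) (by positivity))
    _ = C ^ 2 * R ^ (j + l) * f i (j + l) := by ring

theorem UniformlySubmultiplicative.add_sum_antidiagonal_le (hsub : UniformlySubmultiplicative f)
    (h0 : ∀ i n, 0 ≤ f i n) {C R : ℝ} (hC : 0 ≤ C) (hR : 0 ≤ R)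
    (hfC : ∀ i n, f i n ≤ C * R ^ n) (i : ι) (m : ℕ) :
    f i (2 * m + 1) + ∑ p ∈ antidiagonal (2 * m), f i p.1 * f i p.2 ≤
      (2 * C ^ 2 * m + (C ^ 2 + C * R)) * R ^ m * f i m := by
  have hhead : f i (2 * m + 1) ≤ f i m * (C * R ^ (m + 1)) := by
    rw [show 2 * m + 1 = m + (m + 1) by ring]
    exact hsub (fun j => hfC j _) i m
  have hsum := Finset.sum_le_card_nsmul (antidiagonal (2 * m)) _ _ fun p hp =>
    hsub.mul_le_of_add_eq_two_mul h0 hC hR hfC i (mem_antidiagonal.1 hp)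
  rw [Finset.Nat.card_antidiagonal, nsmul_eq_mul] at hsum
  push_cast at hsum
  linear_combination hhead + hsum

theorem UniformlySubmultiplicative.tendsto_growthRate_of_le_add_sum
    (hsub : UniformlySubmultiplicative f) (h0 : ∀ i n, 0 ≤ f i n)
    (hne : ∃ R, IsGrowthBound f R) (hpos : 0 < growthRate f) {i j : ι}
    (hij : ∀ n, f i n ≤ f j (n + 1) + ∑ p ∈ antidiagonal n, f j p.1 * f j p.2)
    (hi : Tendsto (fun n : ℕ => f i n ^ ((1 : ℝ) / n)) atTop (𝓝 (growthRate f))) :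
    Tendsto (fun n : ℕ => f j n ^ ((1 : ℝ) / n)) atTop (𝓝 (growthRate f)) := by
  refine tendsto_order.2 ⟨fun a ha => ?_, fun b hb =>
    eventually_rpow_one_div_lt_of_growthRate_lt h0 hne hb j⟩
  obtain ⟨R, hRμ, haR⟩ : ∃ R, growthRate f < R ∧ a < growthRate f ^ 2 / R := by
    have hlim : Tendsto (fun R => growthRate f ^ 2 / R) (𝓝[>] growthRate f)
        (𝓝 (growthRate f)) := by
      have hdiv := (tendsto_const_nhds (x := growthRate f ^ 2)).div
        (tendsto_id.mono_left (nhdsWithin_le_nhds (s := Set.Ioi (growthRate f)))) hpos.ne'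
      rwa [sq, mul_div_cancel_right₀ _ hpos.ne', ← sq] at hdiv
    exact (eventually_mem_nhdsWithin.and (hlim.eventually_const_lt ha)).exists
  obtain ⟨hR, C, hC, hfC⟩ := IsGrowthBound.of_growthRate_lt hne hRμ
  exact eventually_lt_rpow_one_div_of_two_mul_le (h0 i) (h0 j) hR (a := 2 * C ^ 2)
    (b := C ^ 2 + C * R) (by positivity) (by positivity) hi
    (fun m => (hij (2 * m)).trans (hsub.add_sum_antidiagonal_le h0 hC.le hR.le hfC j m)) haR

theorem UniformlySubmultiplicative.tendsto_growthRate {V : Type*} {f : V → ℕ → ℝ}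
    (hsub : UniformlySubmultiplicative f) (h0 : ∀ v n, 0 ≤ f v n)
    (hfin : (Set.range f).Finite) (hpos : 0 < growthRate f) {G : SimpleGraph V}
    (hG : G.Preconnected)
    (hadj : ∀ ⦃u v⦄, G.Adj u v → ∀ n,
      f u n ≤ f v (n + 1) + ∑ p ∈ antidiagonal n, f v p.1 * f v p.2) (v : V) :
    Tendsto (fun n : ℕ => f v n ^ ((1 : ℝ) / n)) atTop (𝓝 (growthRate f)) := by
  obtain ⟨w, hw⟩ := hsub.exists_tendsto_growthRate h0 hfin hpos
  obtain ⟨p⟩ := hG w v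
  induction p with
  | nil => exact hw
  | cons huv _ ih =>
    exact ih (hsub.tendsto_growthRate_of_le_add_sum h0
      (hsub.exists_isGrowthBound hfin) hpos (hadj huv) hw)

end GrowthRate

section SelfAvoidingWalks

variable {V : Type*} {G : SimpleGraph V} {u v w : V} {m n : ℕ} {l : List V}

/-- `l` is the list of the `n + 1` vertices visited by an `n`-step self-avoiding walk from `v`.
As opposed to `G.Walk v w`, the type does not mention the endpoint, so walks with different
endpoints can be compared. -/
structure IsSAW (G : SimpleGraph V) (v : V) (n : ℕ) (l : List V) : Prop where
  length_eq : l.length = n + 1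
  head?_eq : l.head? = some v
  isChain : l.IsChain G.Adj
  nodup : l.Nodup

theorem isSAW_support {p : G.Walk v w} (hp : p.IsPath) (hn : p.length = n) :
    IsSAW G v n p.support where
  length_eq := by rw [p.length_support, hn]
  head?_eq := by rw [List.head?_eq_some_head p.support_ne_nil, p.head_support]
  isChain := p.isChain_adj_support
  nodup := hp.support_nodup

theorem eq_of_support_eq {w' : V} {p : G.Walk v w} {q : G.Walk v w'}
    (h : p.support = q.support) : w = w' := by
  rw [← p.getLast_support, ← q.getLast_support]
  simp only [h]

namespace IsSAW

theorem exists_walk (hl : IsSAW G v n l) :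
    ∃ (w : V) (p : G.Walk v w), p.IsPath ∧ p.length = n ∧ p.support = l := by
  have hne : l ≠ [] := List.ne_nil_of_length_eq_add_one hl.length_eq
  obtain rfl : l.head hne = v :=
    Option.some_injective _ ((List.head?_eq_some_head hne).symm.trans hl.head?_eq)
  have hsupp := SimpleGraph.Walk.support_ofSupport hne hl.isChain
  refine ⟨_, .ofSupport l hne hl.isChain, ?_, ?_, hsupp⟩
  · rw [SimpleGraph.Walk.isPath_def, hsupp]
    exact hl.nodup
  · have hlen := congrArg List.length hsupp
    rw [SimpleGraph.Walk.length_support, hl.length_eq] at hlen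
    exact Nat.succ_injective hlen

theorem take (hl : IsSAW G v (m + n) l) : IsSAW G v m (l.take (m + 1)) where
  length_eq := by rw [List.length_take, hl.length_eq]; omega
  head?_eq := by rw [List.head?_take, if_neg m.succ_ne_zero, hl.head?_eq]
  isChain := hl.isChain.take _
  nodup := hl.nodup.sublist (List.take_sublist _ _)

theorem drop (hl : IsSAW G v (m + n) l) (hw : l[m]? = some w) : IsSAW G w n (l.drop m) where
  length_eq := by rw [List.length_drop, hl.length_eq]; omega
  head?_eq := by rw [List.head?_drop, hw]
  isChain := hl.isChain.drop _
  nodup := hl.nodup.sublist (List.drop_sublist _ _)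

theorem reverse (hl : IsSAW G v n l) (hw : l[n]? = some w) : IsSAW G w n l.reverse where
  length_eq := by rw [List.length_reverse, hl.length_eq]
  head?_eq := by
    rw [List.head?_reverse, List.getLast?_eq_getElem?, hl.length_eq, Nat.add_sub_cancel, hw]
  isChain := List.isChain_reverse.2 (hl.isChain.imp fun _ _ h => h.symm)
  nodup := List.nodup_reverse.2 hl.nodup

theorem cons (hl : IsSAW G u n l) (hvu : G.Adj v u) (hv : v ∉ l) : IsSAW G v (n + 1) (v :: l) where
  length_eq := by rw [List.length_cons, hl.length_eq]
  head?_eq := List.head?_cons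
  isChain := List.isChain_cons.2 ⟨by simpa [hl.head?_eq] using hvu, hl.isChain⟩
  nodup := List.nodup_cons.2 ⟨hv, hl.nodup⟩

theorem exists_cons_eq (hl : IsSAW G v (n + 1) l) :
    ∃ w l', G.Adj v w ∧ IsSAW G w n l' ∧ v :: l' = l := by
  match l, hl with
  | a :: b :: l', ⟨hlen, hhead, hchain, hnodup⟩ =>
    obtain rfl : a = v := by simpa using hhead
    rw [List.isChain_cons_cons] at hchain
    exact ⟨b, b :: l', hchain.1, ⟨by simpa using hlen, rfl, hchain.2, hnodup.of_cons⟩, rfl⟩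

theorem map {V' : Type*} {G' : SimpleGraph V'} (hl : IsSAW G v n l) (φ : G →g G')
    (hφ : Function.Injective φ) : IsSAW G' (φ v) n (l.map φ) where
  length_eq := by rw [List.length_map, hl.length_eq]
  head?_eq := by rw [List.head?_map, hl.head?_eq, Option.map_some]
  isChain := (List.isChain_map _).2 (hl.isChain.imp fun _ _ h => φ.map_adj h)
  nodup := hl.nodup.map hφ

end IsSAW

theorem eq_of_take_succ_eq_of_drop_eq {α : Type*} {l l' : List α}
    (htake : l.take (m + 1) = l'.take (m + 1)) (hdrop : l.drop m = l'.drop m) : l = l' := by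
  have htake' : l.take m = l'.take m := by
    simpa [List.take_take] using congrArg (List.take m) htake
  rw [← List.take_append_drop m l, ← List.take_append_drop m l', htake', hdrop]

theorem sawCount_eq_ncard (G : SimpleGraph V) (v : V) (n : ℕ) :
    sawCount G v n = {l | IsSAW G v n l}.ncard := by
  rw [sawCount, ← Nat.card_coe_set_eq]
  refine Nat.card_eq_of_bijective
    (fun p => ⟨p.1.2.support, isSAW_support p.2.1 p.2.2⟩) ⟨?_, ?_⟩
  · rintro ⟨⟨w, p⟩, hp⟩ ⟨⟨w', p'⟩, hp'⟩ h
    have hsupp : p.support = p'.support := congrArg Subtype.val h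
    obtain rfl := eq_of_support_eq hsupp
    obtain rfl := SimpleGraph.Walk.ext_support hsupp
    rfl
  · rintro ⟨l, hl⟩
    obtain ⟨w, p, hp, hpn, hpl⟩ := hl.exists_walk
    exact ⟨⟨⟨w, p⟩, hp, hpn⟩, Subtype.ext hpl⟩

theorem sawCount_map {V' : Type*} {G' : SimpleGraph V'} (φ : G ≃g G') (v : V) (n : ℕ) :
    sawCount G' (φ v) n = sawCount G v n := by
  rw [sawCount_eq_ncard, sawCount_eq_ncard, ← Set.ncard_image_of_injective _
    (List.map_injective_iff.2 φ.injective)]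
  congr 1
  ext l
  refine ⟨fun hl => ⟨l.map φ.symm, ?_, ?_⟩, ?_⟩
  · simpa using hl.map φ.symm.toHom φ.symm.injective
  · simp [Function.comp_def]
  · rintro ⟨l, hl, rfl⟩
    exact hl.map φ.toHom φ.injective

theorem finite_range_sawCount
    (hqt : ∃ W : Finset V, ∀ v : V, ∃ w ∈ W, ∃ γ : G ≃g G, γ v = w) :
    (Set.range (sawCount G)).Finite := by
  obtain ⟨W, hW⟩ := hqt
  refine (W.finite_toSet.image (sawCount G)).subset (Set.range_subset_iff.2 fun v => ?_)
  obtain ⟨w, hw, γ, rfl⟩ := hW v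
  exact ⟨γ v, hw, funext (sawCount_map γ v)⟩

theorem finite_setOf_isSAW (hlf : ∀ v : V, (G.neighborSet v).Finite) (v : V) (n : ℕ) :
    {l | IsSAW G v n l}.Finite := by
  induction n generalizing v with
  | zero =>
    refine (Set.finite_singleton [v]).subset fun l hl => ?_
    obtain ⟨a, rfl⟩ := List.length_eq_one_iff.1 hl.length_eq
    simpa using hl.head?_eq
  | succ n ih =>
    refine (((hlf v).biUnion fun w _ => ih w).image (List.cons v)).subset fun l hl => ?_
    obtain ⟨w, l', hvw, hl', rfl⟩ := hl.exists_cons_eq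
    exact ⟨l', Set.mem_biUnion hvw hl', rfl⟩

theorem exists_isSAW [Infinite V] (hlf : ∀ v : V, (G.neighborSet v).Finite)
    (hG : G.Preconnected) (v : V) (n : ℕ) : ∃ l, IsSAW G v n l := by
  by_contra! hnone
  choose p hp using fun w => (hG v w).exists_isPath
  have hlen (w : V) : (p w).length < n := by
    by_contra! hn
    obtain ⟨k, hk⟩ := Nat.exists_eq_add_of_le hn
    exact hnone _ (isSAW_support (hp w) hk).take
  have hfin : (⋃ k ∈ Set.Iio n, {l | IsSAW G v k l}).Finite :=
    (Set.finite_Iio n).biUnion fun k _ => finite_setOf_isSAW hlf v k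
  refine Set.infinite_range_of_injective (f := fun w => (p w).support)
    (fun _ _ h => eq_of_support_eq h) (hfin.subset ?_)
  rintro _ ⟨w, rfl⟩
  exact Set.mem_biUnion (hlen w) (isSAW_support (hp w) rfl)

theorem one_le_sawCount [Infinite V] (hlf : ∀ v : V, (G.neighborSet v).Finite)
    (hG : G.Preconnected) (v : V) (n : ℕ) : 1 ≤ sawCount G v n := by
  rw [sawCount_eq_ncard]
  exact (Set.ncard_pos (finite_setOf_isSAW hlf v n)).2 (exists_isSAW hlf hG v n)

theorem ncard_setOf_isSAW_take_eq_le (hlf : ∀ v : V, (G.neighborSet v).Finite)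
    {q : List V} (v : V) (n : ℕ) (hw : q[m]? = some w) :
    {l | IsSAW G v (m + n) l ∧ l.take (m + 1) = q}.ncard ≤ sawCount G w n := by
  rw [sawCount_eq_ncard]
  refine Set.ncard_le_ncard_of_injOn (List.drop m) ?_ ?_ (finite_setOf_isSAW hlf w n)
  · rintro l ⟨hl, rfl⟩
    exact hl.drop (by rwa [List.getElem?_take_of_lt m.lt_succ_self] at hw)
  · rintro l ⟨-, hl⟩ l' ⟨-, hl'⟩ hdrop
    exact eq_of_take_succ_eq_of_drop_eq (hl.trans hl'.symm) hdrop

theorem uniformlySubmultiplicative_sawCount (hlf : ∀ v : V, (G.neighborSet v).Finite) :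
    UniformlySubmultiplicative fun v n => (sawCount G v n : ℝ) := by
  intro n B hB v m
  let heads := (finite_setOf_isSAW hlf v m).toFinset
  let extensions (q : List V) := {l | IsSAW G v (m + n) l ∧ l.take (m + 1) = q}
  have hcover : {l | IsSAW G v (m + n) l} = ⋃ q ∈ heads, extensions q := by
    ext l
    simpa [heads, extensions] using fun hl : IsSAW G v (m + n) l => hl.take
  have hext (q : List V) (hq : q ∈ heads) : ((extensions q).ncard : ℝ) ≤ B := by
    have hlen : m < q.length := by
      rw [((finite_setOf_isSAW hlf v m).mem_toFinset.1 hq).length_eq]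
      exact m.lt_succ_self
    exact (Nat.cast_le.2 (ncard_setOf_isSAW_take_eq_le hlf v n
      (List.getElem?_eq_getElem hlen))).trans (hB _)
  calc (sawCount G v (m + n) : ℝ) ≤ ∑ q ∈ heads, ((extensions q).ncard : ℝ) := by
        rw [sawCount_eq_ncard, hcover]
        exact_mod_cast heads.set_ncard_biUnion_le extensions
    _ ≤ heads.card * B := by
        simpa only [nsmul_eq_mul] using Finset.sum_le_card_nsmul heads _ B hext
    _ = sawCount G v m * B := by
        rw [sawCount_eq_ncard, Set.ncard_eq_toFinset_card _ (finite_setOf_isSAW hlf v m)]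

theorem ncard_setOf_isSAW_notMem_le (hlf : ∀ v : V, (G.neighborSet v).Finite)
    (huv : G.Adj u v) (n : ℕ) : {l | IsSAW G u n l ∧ v ∉ l}.ncard ≤ sawCount G v (n + 1) := by
  rw [sawCount_eq_ncard]
  exact Set.ncard_le_ncard_of_injOn (List.cons v) (fun l hl => hl.1.cons huv.symm hl.2)
    List.cons_injective.injOn (finite_setOf_isSAW hlf v (n + 1))

theorem ncard_setOf_isSAW_getElem?_eq_le (hlf : ∀ v : V, (G.neighborSet v).Finite)
    (u v : V) (m n : ℕ) :
    {l | IsSAW G u (m + n) l ∧ l[m]? = some v}.ncard ≤ sawCount G v m * sawCount G v n := by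
  have hfin := finite_setOf_isSAW hlf v
  rw [sawCount_eq_ncard, sawCount_eq_ncard, ← Set.ncard_prod]
  refine Set.ncard_le_ncard_of_injOn (fun l => ((l.take (m + 1)).reverse, l.drop m)) ?_ ?_
    ((hfin m).prod (hfin n))
  · rintro l ⟨hl, hv⟩
    refine ⟨hl.take.reverse ?_, hl.drop hv⟩
    rwa [List.getElem?_take_of_lt m.lt_succ_self]
  · intro l _ l' _ h
    simp only [Prod.mk.injEq, List.reverse_inj] at h
    exact eq_of_take_succ_eq_of_drop_eq h.1 h.2

theorem sawCount_le_add_sum_of_adj (hlf : ∀ v : V, (G.neighborSet v).Finite)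
    (huv : G.Adj u v) (n : ℕ) :
    sawCount G u n ≤ sawCount G v (n + 1) +
      ∑ p ∈ antidiagonal n, sawCount G v p.1 * sawCount G v p.2 := by
  let avoiding := {l | IsSAW G u n l ∧ v ∉ l}
  let visitingAt (k : ℕ) := {l | IsSAW G u n l ∧ l[k]? = some v}
  have hcover : {l | IsSAW G u n l} = avoiding ∪ ⋃ p ∈ antidiagonal n, visitingAt p.1 := by
    refine Set.Subset.antisymm (fun l hl => ?_) (Set.union_subset (fun l hl => hl.1)
      (Set.iUnion₂_subset fun p _ l hl => hl.1))
    by_cases hv : v ∈ l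
    · obtain ⟨k, hk⟩ := List.mem_iff_getElem?.1 hv
      obtain ⟨hkl, -⟩ := List.getElem?_eq_some_iff.1 hk
      rw [hl.length_eq] at hkl
      exact Or.inr (Set.mem_biUnion (x := (k, n - k))
        (mem_antidiagonal.2 (Nat.add_sub_of_le (Nat.le_of_lt_succ hkl))) ⟨hl, hk⟩)
    · exact Or.inl ⟨hl, hv⟩
  have hvisit : ∀ p ∈ antidiagonal n,
      (visitingAt p.1).ncard ≤ sawCount G v p.1 * sawCount G v p.2 := by
    rintro ⟨k, j⟩ hkj
    obtain rfl := mem_antidiagonal.1 hkj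
    exact ncard_setOf_isSAW_getElem?_eq_le hlf u v k j
  rw [sawCount_eq_ncard, hcover]
  exact (Set.ncard_union_le _ _).trans (add_le_add (ncard_setOf_isSAW_notMem_le hlf huv n)
    ((Finset.set_ncard_biUnion_le _ _).trans (Finset.sum_le_sum hvisit)))

end SelfAvoidingWalks

/-- Hammersley's theorem: an infinite, connected, locally finite, quasi-transitive simple
graph has a connective constant `μ ∈ [1, ∞)`, i.e. `σ_n(v)^{1/n} → μ` for every vertex `v`. -/
theorem connective_constant_exists {V : Type*} (G : SimpleGraph V) [Infinite V]
    (hconn : G.Connected)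
    (hlf : ∀ v : V, (G.neighborSet v).Finite)
    (hqt : ∃ W : Finset V, ∀ v : V, ∃ w ∈ W, ∃ γ : G ≃g G, γ v = w) :
    ∃ μ : ℝ, 1 ≤ μ ∧ ∀ v : V,
      Tendsto (fun n : ℕ => (sawCount G v n : ℝ) ^ ((1 : ℝ) / n)) atTop (nhds μ) := by
  have hsub := uniformlySubmultiplicative_sawCount hlf
  have hnonneg (v : V) (n : ℕ) : (0 : ℝ) ≤ sawCount G v n := Nat.cast_nonneg _
  have hfin : (Set.range fun v n => (sawCount G v n : ℝ)).Finite := by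
    rw [Set.range_comp' (fun (σ : ℕ → ℕ) n => (σ n : ℝ)) (sawCount G)]
    exact (finite_range_sawCount hqt).image _
  obtain ⟨v₀⟩ := hconn.nonempty
  have hone := one_le_growthRate (hsub.exists_isGrowthBound hfin) (i := v₀)
    fun n => Nat.one_le_cast.2 (one_le_sawCount hlf hconn.preconnected v₀ n)
  refine ⟨_, hone, hsub.tendsto_growthRate hnonneg hfin (one_pos.trans_le hone)
    hconn.preconnected fun u v huv n => ?_⟩
  exact_mod_cast sawCount_le_add_sum_of_adj hlf huv n
end

section
/- Let G be an infinite, connected, quasi-transitive, cubic simple graph, and let F(G) be its Fisher transformation. If σ_n(v)^{1/n} → μ as n → ∞ for some vertex v of G, and σ'_n(d)^{1/n} → μ' as n → ∞ for some vertex d of F(G) (where σ' counts SAWs in F(G)), then 1/μ = (1/μ')² + (1/μ')³. -/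
open Filter

/-- The Fisher transformation of a (cubic) graph `G`: the vertices are the darts of `G`;
two distinct darts are adjacent iff they share the same first vertex, or each is the
reversal of the other. -/
def fisher {V : Type*} (G : SimpleGraph V) : SimpleGraph G.Dart :=
  SimpleGraph.fromRel (fun d d' => d.toProd.1 = d'.toProd.1 ∨ d' = d.symm)

/-!
Let `Z(z)` be the generating function of the self-avoiding walks of `G`, and `Z'(z)` that of
`fisher G`. A walk that enters a triangle of `fisher G` along an edge of `G` can leave it along each
of the other two edges, after one or two steps inside the triangle. Hence a walk of `G` lifts to
walks of `fisher G`, each of its steps being replaced by two or three, and the lifts contribute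
`Z(z ^ 2 + z ^ 3)`. Conversely, on leaving a triangle a self-avoiding walk has used up two of its
three vertices, so it can enter this triangle once more only to end there: up to a bounded number of
steps at either end, all self-avoiding walks of `fisher G` are lifts. So for `z > 0` the series
`Z(z ^ 2 + z ^ 3)` and `Z'(z)` converge together, which relates their radii of convergence; by
Cauchy–Hadamard these are `1 / μ` and `1 / μ'`. The radius for `G` does not depend on the starting
vertex, because a walk from `u` through `v` splits into two walks from `v`.
-/

open scoped ENNReal NNReal

section ENNReal

lemma tsum_insert_insert_singleton {α : Type*} {a b c : α} (hab : a ≠ b) (hac : a ≠ c)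
    (hbc : b ≠ c) (g : α → ℝ≥0∞) : ∑' x : ({a, b, c} : Set α), g x = g a + (g b + g c) := by
  classical
  rw [← Finset.coe_pair, ← Finset.coe_insert, Finset.tsum_subtype', Finset.sum_insert (by simp_all),
    Finset.sum_pair hbc]

lemma strictMono_sq_add_cube : StrictMono fun x : ℝ≥0∞ => x ^ 2 + x ^ 3 := fun _ _ hxy =>
  ENNReal.add_lt_add (ENNReal.pow_right_strictMono two_ne_zero hxy)
    (ENNReal.pow_right_strictMono three_ne_zero hxy)

lemma surjective_sq_add_cube : Function.Surjective fun x : ℝ≥0∞ => x ^ 2 + x ^ 3 := fun y =>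
  mem_range_of_exists_le_of_exists_ge (by fun_prop) ⟨0, by simp⟩ ⟨⊤, by simp⟩

lemma eq_sq_add_cube_of_forall_lt {α β : ℝ≥0∞}
    (hβ : ∀ z : ℝ≥0, z ≠ 0 → z < β → (z : ℝ≥0∞) ^ 2 + z ^ 3 ≤ α)
    (hα : ∀ z : ℝ≥0, z ≠ 0 → (z : ℝ≥0∞) ^ 2 + z ^ 3 < α → z ≤ β) : α = β ^ 2 + β ^ 3 := by
  obtain ⟨γ, rfl⟩ := surjective_sq_add_cube α
  refine congrArg (fun x : ℝ≥0∞ => x ^ 2 + x ^ 3) (le_antisymm ?_ ?_)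
  · refine ENNReal.le_of_forall_nnreal_lt fun z hz => ?_
    obtain rfl | hz₀ := eq_or_ne z 0
    · simp
    · exact hα z hz₀ (strictMono_sq_add_cube hz)
  · refine ENNReal.le_of_forall_nnreal_lt fun z hz => ?_
    obtain rfl | hz₀ := eq_or_ne z 0
    · simp
    · exact strictMono_sq_add_cube.le_iff_le.1 (hβ z hz₀ hz)

end ENNReal

section GeneratingFunction

variable {V : Type*} (G : SimpleGraph V)

/-- The self-avoiding walks from `v` that have fewer than `n` steps and visit no vertex of `A`.
The choice `n = ⊤` imposes no bound on the number of steps. -/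
def avoidingPaths (n : ℕ∞) (A : Set V) (v : V) : Set (Σ w, G.Walk v w) :=
  {p | p.2.IsPath ∧ p.2.length < n ∧ ∀ x ∈ p.2.support, x ∉ A}

/-- The generating function at `z` of the self-avoiding walks in `avoidingPaths G n A v`, counted
by their number of steps. Its values are taken in `ℝ≥0∞`, so that divergence means `⊤`. -/
noncomputable def sawGenFun (z : ℝ≥0∞) (n : ℕ∞) (A : Set V) (v : V) : ℝ≥0∞ :=
  ∑' p : avoidingPaths G n A v, z ^ p.1.2.length

variable {G} {z : ℝ≥0∞} {n m : ℕ∞} {A B : Set V} {u v : V}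

lemma sawGenFun_mono (hmn : m ≤ n) (hAB : A ⊆ B) (v : V) :
    sawGenFun G z m B v ≤ sawGenFun G z n A v :=
  ENNReal.tsum_mono_subtype (fun p : Σ w, G.Walk v w => z ^ p.2.length) fun _ hp =>
    ⟨hp.1, hp.2.1.trans_le hmn, fun x hx hxA => hp.2.2 x hx (hAB hxA)⟩

lemma sawGenFun_zero (z : ℝ≥0∞) (A : Set V) (v : V) : sawGenFun G z 0 A v = 0 := by
  have : IsEmpty (avoidingPaths G 0 A v) := ⟨fun p => not_lt_zero p.2.2.1⟩
  exact tsum_empty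

lemma sawGenFun_of_mem (z : ℝ≥0∞) (n : ℕ∞) (hv : v ∈ A) : sawGenFun G z n A v = 0 := by
  have : IsEmpty (avoidingPaths G n A v) :=
    ⟨fun p => p.2.2.2 v p.1.2.start_mem_support hv⟩
  exact tsum_empty

lemma cons_mem_avoidingPaths_iff {w t : V} (h : G.Adj v w) (p : G.Walk w t) (hv : v ∉ A) :
    ⟨t, p.cons h⟩ ∈ avoidingPaths G (n + 1) A v ↔ ⟨t, p⟩ ∈ avoidingPaths G n (insert v A) w := by
  simp only [avoidingPaths, Set.mem_ofPred_eq, SimpleGraph.Walk.cons_isPath_iff,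
    SimpleGraph.Walk.length_cons, SimpleGraph.Walk.support_cons, List.forall_mem_cons,
    Set.mem_insert_iff, not_or, Nat.cast_add, Nat.cast_one,
    ENat.add_lt_add_iff_right ENat.one_ne_top]
  constructor
  · rintro ⟨⟨hp, hvp⟩, hn, -, hA⟩
    exact ⟨hp, hn, fun x hx => ⟨fun hxv => hvp (hxv ▸ hx), hA x hx⟩⟩
  · rintro ⟨hp, hn, hA⟩
    exact ⟨⟨hp, fun hvp => (hA v hvp).1 rfl⟩, hn, hv, fun x hx => (hA x hx).2⟩

/-- The decomposition of the nontrivial walks in `avoidingPaths G (n + 1) A v` according to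
their first step, as a map from tails to walks. -/
def consAvoidingPath (n : ℕ∞) (hv : v ∉ A)
    (t : Σ w : G.neighborSet v, avoidingPaths G n (insert v A) w.1) :
    avoidingPaths G (n + 1) A v :=
  ⟨⟨t.2.1.1, t.2.1.2.cons t.1.2⟩, (cons_mem_avoidingPaths_iff _ _ hv).2 t.2.2⟩

lemma nil_mem_avoidingPaths (n : ℕ∞) (hv : v ∉ A) :
    ⟨v, .nil⟩ ∈ avoidingPaths G (n + 1) A v := by
  simp [avoidingPaths, hv]

lemma bijective_elim_nil_consAvoidingPath (n : ℕ∞) (hv : v ∉ A) :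
    Function.Bijective (Sum.elim (fun _ : Unit => ⟨⟨v, .nil⟩, nil_mem_avoidingPaths n hv⟩)
      (consAvoidingPath (G := G) n hv)) := by
  constructor
  · rw [Sum.elim_injective]
    refine ⟨Function.injective_of_subsingleton _, ?_, ?_⟩
    · rintro ⟨⟨w, hw⟩, ⟨⟨t, p⟩, hp⟩⟩ ⟨⟨w', hw'⟩, ⟨⟨t', p'⟩, hp'⟩⟩ heq
      simp only [consAvoidingPath, Subtype.mk.injEq, Sigma.mk.injEq] at heq
      obtain ⟨rfl, heq⟩ := heq
      obtain ⟨rfl, heq⟩ := SimpleGraph.Walk.cons.inj (eq_of_heq heq)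
      obtain rfl := eq_of_heq heq
      rfl
    · rintro - ⟨⟨w, hw⟩, ⟨⟨t, p⟩, hp⟩⟩ heq
      exact Nat.succ_ne_zero _ (congrArg (fun q => q.1.2.length) heq).symm
  · rintro ⟨⟨t, _ | ⟨h, p⟩⟩, hp⟩
    · exact ⟨.inl (), rfl⟩
    · exact ⟨.inr ⟨⟨_, h⟩, ⟨⟨t, p⟩, (cons_mem_avoidingPaths_iff h p hv).1 hp⟩⟩, rfl⟩

theorem sawGenFun_add_one (z : ℝ≥0∞) (n : ℕ∞) (hv : v ∉ A) :
    sawGenFun G z (n + 1) A v =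
      1 + z * ∑' w : G.neighborSet v, sawGenFun G z n (insert v A) w := by
  rw [sawGenFun, ← (Equiv.ofBijective _ (bijective_elim_nil_consAvoidingPath n hv)).tsum_eq,
    Summable.tsum_sum ENNReal.summable ENNReal.summable, ENNReal.tsum_sigma']
  change ∑' _ : Unit, z ^ 0 + ∑' w : G.neighborSet v,
    ∑' p : avoidingPaths G n (insert v A) w.1, z ^ (p.1.2.length + 1) = _
  simp only [pow_zero, pow_succ', ENNReal.tsum_mul_left, tsum_fintype, Finset.univ_unique,
    Finset.sum_singleton, sawGenFun]

lemma sawGenFun_add_one_le (z : ℝ≥0∞) (n : ℕ∞) (A : Set V) (v : V) :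
    sawGenFun G z (n + 1) A v ≤
      1 + z * ∑' w : G.neighborSet v, sawGenFun G z n (insert v A) w := by
  by_cases hv : v ∈ A
  · simp [sawGenFun_of_mem z _ hv]
  · exact (sawGenFun_add_one z n hv).le

lemma sawGenFun_top_le {c : ℝ≥0∞} (h : ∀ n : ℕ, sawGenFun G z n A v ≤ c) :
    sawGenFun G z ⊤ A v ≤ c := by
  rw [sawGenFun, ENNReal.tsum_eq_iSup_sum]
  refine iSup_le fun s => ?_
  let n := s.sup (fun p : avoidingPaths G ⊤ A v => p.1.2.length) + 1
  let i : ↥(s : Set (avoidingPaths G ⊤ A v)) → avoidingPaths G n A v := fun p =>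
    ⟨p.1.1, p.1.2.1, mod_cast Nat.lt_succ_of_le
      (Finset.le_sup (f := fun q : avoidingPaths G ⊤ A v => q.1.2.length) p.2), p.1.2.2.2⟩
  have hi : Function.Injective i := fun p q hpq =>
    Subtype.ext (Subtype.ext (congrArg Subtype.val hpq :))
  calc ∑ p ∈ s, z ^ p.1.2.length
      = ∑' p : ↥(s : Set (avoidingPaths G ⊤ A v)), z ^ (i p).1.2.length :=
        (Finset.tsum_subtype' s fun p => z ^ p.1.2.length).symm
    _ ≤ sawGenFun G z n A v :=
        ENNReal.tsum_comp_le_tsum_of_injective hi fun p => z ^ p.1.2.length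
    _ ≤ c := h n

open Classical in
/-- The walk `p` from `u` through `v`, cut at `v`: the reversal of its initial segment and its final
segment, which both start at `v`. -/
noncomputable def splitAt (A : Set V) (u v : V)
    (p : {p ∈ avoidingPaths G ⊤ A u | v ∈ p.2.support}) :
    avoidingPaths G ⊤ A v × avoidingPaths G ⊤ A v :=
  ⟨⟨⟨u, (p.1.2.takeUntil v p.2.2).reverse⟩, (p.2.1.1.takeUntil p.2.2).reverse,
      ENat.natCast_lt_top _, fun x hx => p.2.1.2.2 x <|
        p.1.2.support_takeUntil_subset_support p.2.2 (by simpa using hx)⟩,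
    ⟨⟨p.1.1, p.1.2.dropUntil v p.2.2⟩, p.2.1.1.dropUntil p.2.2,
      ENat.natCast_lt_top _, fun x hx => p.2.1.2.2 x <|
        p.1.2.support_dropUntil_subset_support p.2.2 hx⟩⟩

lemma splitAt_injective (A : Set V) (u v : V) :
    Function.Injective (splitAt (G := G) A u v) := by
  classical
  rintro ⟨⟨w, p⟩, hp⟩ ⟨⟨w', p'⟩, hp'⟩ heq
  have hfst := congrArg (fun q => q.1.1) heq
  have hsnd := congrArg (fun q => q.2.1) heq
  obtain rfl : w = w' := congrArg Sigma.fst hsnd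
  have htake : p.takeUntil v hp.2 = p'.takeUntil v hp'.2 :=
    SimpleGraph.Walk.reverse_injective (eq_of_heq (Sigma.mk.inj hfst).2)
  have hdrop : p.dropUntil v hp.2 = p'.dropUntil v hp'.2 := eq_of_heq (Sigma.mk.inj hsnd).2
  obtain rfl : p = p' := by rw [← p.take_spec hp.2, htake, hdrop, p'.take_spec hp'.2]
  rfl

lemma length_splitAt (A : Set V) (u v : V)
    (p : {p ∈ avoidingPaths G ⊤ A u | v ∈ p.2.support}) :
    (splitAt A u v p).1.1.2.length + (splitAt A u v p).2.1.2.length = p.1.2.length := by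
  classical
  simp only [splitAt, SimpleGraph.Walk.length_reverse, ← SimpleGraph.Walk.length_append,
    SimpleGraph.Walk.take_spec]

theorem sawGenFun_top_le_insert_add_sq (z : ℝ≥0∞) (A : Set V) (u v : V) :
    sawGenFun G z ⊤ A u ≤ sawGenFun G z ⊤ (insert v A) u + sawGenFun G z ⊤ A v ^ 2 := by
  let weight (p : Σ w, G.Walk u w) : ℝ≥0∞ := z ^ p.2.length
  have hcover : avoidingPaths G ⊤ A u ⊆
      avoidingPaths G ⊤ (insert v A) u ∪ {p ∈ avoidingPaths G ⊤ A u | v ∈ p.2.support} := by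
    intro p hp
    by_cases hv : v ∈ p.2.support
    · exact .inr ⟨hp, hv⟩
    · refine .inl ⟨hp.1, hp.2.1, ?_⟩
      rintro x hx (rfl | hxA)
      exacts [hv hx, hp.2.2 x hx hxA]
  have hthrough : ∑' p : {p ∈ avoidingPaths G ⊤ A u | v ∈ p.2.support}, weight p ≤
      sawGenFun G z ⊤ A v ^ 2 := by
    calc _ = ∑' p, z ^ (splitAt A u v p).1.1.2.length * z ^ (splitAt A u v p).2.1.2.length := by
          simp only [← pow_add, length_splitAt, weight]
      _ ≤ ∑' q : avoidingPaths G ⊤ A v × avoidingPaths G ⊤ A v,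
          z ^ q.1.1.2.length * z ^ q.2.1.2.length :=
        ENNReal.tsum_comp_le_tsum_of_injective (splitAt_injective A u v)
          fun q => z ^ q.1.1.2.length * z ^ q.2.1.2.length
      _ = sawGenFun G z ⊤ A v ^ 2 := by
        rw [ENNReal.tsum_prod']
        simp only [ENNReal.tsum_mul_left, ENNReal.tsum_mul_right, sq, sawGenFun]
  calc sawGenFun G z ⊤ A u ≤ _ := ENNReal.tsum_mono_subtype weight hcover
    _ ≤ _ := ENNReal.tsum_union_le weight _ _
    _ ≤ _ := add_le_add_right hthrough _

lemma sawGenFun_ne_top_of_reachable (hz : z ≠ 0) (huv : G.Reachable u v)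
    (hu : sawGenFun G z ⊤ ∅ u ≠ ⊤) : sawGenFun G z ⊤ ∅ v ≠ ⊤ := by
  obtain ⟨p⟩ := huv
  induction p with
  | nil => exact hu
  | @cons u w _ h _ ih =>
    refine ih (ne_top_of_le_ne_top ?_ (sawGenFun_top_le_insert_add_sq z ∅ w u))
    have hstep : z * sawGenFun G z ⊤ {u} w ≤ sawGenFun G z ⊤ ∅ u := by
      rw [← top_add 1, sawGenFun_add_one z ⊤ (Set.notMem_empty u), insert_empty_eq]
      grw [← ENNReal.le_tsum (⟨w, h⟩ : G.neighborSet u)]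
      exact le_add_self
    have havoid : sawGenFun G z ⊤ {u} w ≠ ⊤ := fun htop =>
      ne_top_of_le_ne_top hu hstep (by rw [htop, ENNReal.mul_top hz])
    simpa using ⟨havoid, hu⟩

lemma sawGenFun_natCast_ne_top (hG : ∀ v, (G.neighborSet v).Finite) (hz : z ≠ ⊤) (n : ℕ)
    (A : Set V) (v : V) : sawGenFun G z n A v ≠ ⊤ := by
  induction n generalizing A v with
  | zero => simp [sawGenFun_zero]
  | succ n ih =>
    have := (hG v).fintype
    refine ne_top_of_le_ne_top ?_ (sawGenFun_add_one_le z n A v)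
    rw [tsum_fintype]
    exact ENNReal.add_ne_top.2 ⟨ENNReal.one_ne_top,
      ENNReal.mul_ne_top hz (ENNReal.sum_ne_top.2 fun w _ => ih _ _)⟩

lemma finite_isPath_length_eq (hG : ∀ v, (G.neighborSet v).Finite) (v : V) (n : ℕ) :
    Finite {p : Σ w, G.Walk v w // p.2.IsPath ∧ p.2.length = n} := by
  have hone : ∑' _ : avoidingPaths G (n + 1 : ℕ) ∅ v, (1 : ℝ≥0∞) ≠ ⊤ := by
    simpa [sawGenFun] using sawGenFun_natCast_ne_top hG ENNReal.one_ne_top (n + 1) ∅ v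
  have hfin : (avoidingPaths G (n + 1 : ℕ) ∅ v).Finite := by
    by_contra hinf
    have := Set.infinite_coe_iff.2 hinf
    exact hone (ENNReal.tsum_const_eq_top_of_ne_zero one_ne_zero)
  exact hfin.subset fun p hp => ⟨hp.1, Nat.cast_lt.2 (hp.2 ▸ Nat.lt_succ_self _),
    fun _ _ => Set.notMem_empty _⟩

theorem sawGenFun_eq_tsum_sawCount (hG : ∀ v, (G.neighborSet v).Finite) (z : ℝ≥0∞) (v : V) :
    sawGenFun G z ⊤ ∅ v = ∑' n, sawCount G v n * z ^ n := by
  let len (p : avoidingPaths G ⊤ ∅ v) : ℕ := p.1.2.length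
  rw [sawGenFun, ← ENNReal.tsum_fiberwise _ len]
  refine tsum_congr fun n => ?_
  let e : len ⁻¹' {n} ≃ {p : Σ w, G.Walk v w // p.2.IsPath ∧ p.2.length = n} :=
    { toFun p := ⟨p.1.1, p.1.2.1, p.2⟩
      invFun q := ⟨⟨q.1, q.2.1, ENat.natCast_lt_top _, fun _ _ => Set.notMem_empty _⟩, q.2.2⟩
      left_inv _ := rfl
      right_inv _ := rfl }
  have := finite_isPath_length_eq hG v n
  calc ∑' p : len ⁻¹' {n}, z ^ p.1.1.2.length = ∑' _ : len ⁻¹' {n}, z ^ n :=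
        tsum_congr fun p => congrArg (z ^ ·) p.2
    _ = sawCount G v n * z ^ n := by
      rw [ENNReal.tsum_const, ENat.card_congr e, ENat.card_eq_coe_natCard]
      rfl

lemma sawGenFun_one_eq_top [Infinite V] (hG : G.Connected) (v : V) :
    sawGenFun G 1 ⊤ ∅ v = ⊤ := by
  have hends : Function.Surjective fun p : avoidingPaths G ⊤ ∅ v => p.1.1 := fun w =>
    let ⟨p, hp⟩ := hG.exists_isPath v w
    ⟨⟨⟨w, p⟩, hp, ENat.natCast_lt_top _, fun _ _ => Set.notMem_empty _⟩, rfl⟩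
  have := Infinite.of_surjective _ hends
  simp only [sawGenFun, one_pow]
  exact ENNReal.tsum_const_eq_top_of_ne_zero one_ne_zero

end GeneratingFunction

section Radius

variable {V : Type*} {G : SimpleGraph V} {u v : V}

/-- The radius of convergence of `∑ σ_n(v) z^n`, where `σ_n(v)` is the number of `n`-step
self-avoiding walks from `v`. -/
noncomputable def sawRadius (G : SimpleGraph V) (v : V) : ℝ≥0∞ :=
  (FormalMultilinearSeries.ofScalars ℝ fun n => (sawCount G v n : ℝ)).radius

lemma nnnorm_ofScalars_natCast (a : ℕ → ℕ) (n : ℕ) :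
    ‖FormalMultilinearSeries.ofScalars ℝ (fun n => (a n : ℝ)) n‖₊ = a n :=
  NNReal.eq (by simp)

lemma sawGenFun_ne_top_of_lt_sawRadius (hG : ∀ v, (G.neighborSet v).Finite) {z : ℝ≥0}
    (hz : z < sawRadius G v) : sawGenFun G z ⊤ ∅ v ≠ ⊤ := by
  have hsum := FormalMultilinearSeries.summable_nnnorm_mul_pow _ hz
  simp only [nnnorm_ofScalars_natCast] at hsum
  rw [sawGenFun_eq_tsum_sawCount hG]
  exact_mod_cast ENNReal.tsum_coe_ne_top_iff_summable.2 hsum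

lemma le_sawRadius (hG : ∀ v, (G.neighborSet v).Finite) {z : ℝ≥0}
    (hz : sawGenFun G z ⊤ ∅ v ≠ ⊤) : z ≤ sawRadius G v := by
  rw [sawGenFun_eq_tsum_sawCount hG] at hz
  refine FormalMultilinearSeries.le_radius_of_summable_nnnorm _ ?_
  simp only [nnnorm_ofScalars_natCast]
  exact ENNReal.tsum_coe_ne_top_iff_summable.1 (by exact_mod_cast hz)

theorem sawRadius_le_of_reachable (hG : ∀ v, (G.neighborSet v).Finite) (huv : G.Reachable u v) :
    sawRadius G u ≤ sawRadius G v := by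
  refine ENNReal.le_of_forall_nnreal_lt fun z hz => ?_
  obtain rfl | hz₀ := eq_or_ne z 0
  · simp
  · exact le_sawRadius hG <| sawGenFun_ne_top_of_reachable (mod_cast hz₀) huv
      (sawGenFun_ne_top_of_lt_sawRadius hG hz)

theorem sawRadius_eq_of_reachable (hG : ∀ v, (G.neighborSet v).Finite) (huv : G.Reachable u v) :
    sawRadius G u = sawRadius G v :=
  (sawRadius_le_of_reachable hG huv).antisymm (sawRadius_le_of_reachable hG huv.symm)

theorem sawRadius_le_one [Infinite V] (hconn : G.Connected) (hG : ∀ v, (G.neighborSet v).Finite)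
    (v : V) : sawRadius G v ≤ 1 := by
  by_contra! hlt
  exact sawGenFun_ne_top_of_lt_sawRadius (z := 1) hG (mod_cast hlt)
    (mod_cast sawGenFun_one_eq_top hconn v)

theorem toReal_sawRadius_of_tendsto {μ : ℝ}
    (hμ : Tendsto (fun n : ℕ => (sawCount G v n : ℝ) ^ ((1 : ℝ) / n)) atTop (nhds μ)) :
    (sawRadius G v).toReal = 1 / μ := by
  have hμ₀ : 0 ≤ μ := ge_of_tendsto' hμ fun n => by positivity
  have hinv : (sawRadius G v)⁻¹ = ENNReal.ofReal μ := by
    rw [sawRadius, FormalMultilinearSeries.radius_inv_eq_limsup]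
    refine Tendsto.limsup_eq ((ENNReal.tendsto_ofReal hμ).congr fun n => ?_)
    rw [← ENNReal.ofReal_coe_nnreal, NNReal.coe_rpow, nnnorm_ofScalars_natCast]
    simp
  rw [← inv_inv (sawRadius G v), ENNReal.toReal_inv, hinv, ENNReal.toReal_ofReal hμ₀, one_div]

end Radius

section DartTriangle

variable {V : Type*} {G : SimpleGraph V} {d e f : G.Dart}

/-- The darts `d`, `e`, `f` are distinct, and they are all the darts with their common first vertex.
They form the triangle of the Fisher graph that replaces this vertex. -/
structure IsDartTriangle (d e f : G.Dart) : Prop where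
  ne₁₂ : d ≠ e
  ne₁₃ : d ≠ f
  ne₂₃ : e ≠ f
  fst_eq_iff : ∀ x : G.Dart, x.fst = d.fst ↔ x = d ∨ x = e ∨ x = f

lemma finite_neighborSet (hcubic : ∀ v, (G.neighborSet v).ncard = 3) (v : V) :
    (G.neighborSet v).Finite :=
  Set.finite_of_ncard_ne_zero (hcubic v ▸ three_ne_zero)

lemma exists_isDartTriangle (hcubic : ∀ v, (G.neighborSet v).ncard = 3) (d : G.Dart) :
    ∃ e f, IsDartTriangle d e f := by
  have hfiber : {x : G.Dart | x.fst = d.fst} = Set.range (G.dartOfNeighborSet d.fst) := by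
    ext x
    exact ⟨fun hx => ⟨⟨x.snd, hx ▸ x.adj⟩, SimpleGraph.Dart.ext _ _ (Prod.ext hx.symm rfl)⟩,
      fun ⟨w, hw⟩ => hw ▸ rfl⟩
  have hcard : {x : G.Dart | x.fst = d.fst}.ncard = 3 := by
    rw [hfiber, ← Set.image_univ, Set.ncard_image_of_injective _ (G.dartOfNeighborSet_injective _),
      Set.ncard_univ, Nat.card_coe_set_eq, hcubic]
  have hcard' : ({x : G.Dart | x.fst = d.fst} \ {d}).ncard = 2 := by
    rw [Set.ncard_sdiff_singleton_of_mem (show d ∈ {x : G.Dart | x.fst = d.fst} from rfl), hcard]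
  obtain ⟨e, f, hef, heq⟩ := Set.ncard_eq_two.1 hcard'
  have hmem (x : G.Dart) : x.fst = d.fst ∧ x ≠ d ↔ x = e ∨ x = f := Set.ext_iff.1 heq x
  have hfst (x : G.Dart) : x.fst = d.fst ↔ x = d ∨ x = e ∨ x = f := by grind
  exact ⟨e, f, ((hmem e).2 (.inl rfl)).2.symm, ((hmem f).2 (.inr rfl)).2.symm, hef, hfst⟩

lemma fisher_adj_iff {d e : G.Dart} :
    (fisher G).Adj d e ↔ d ≠ e ∧ (e.fst = d.fst ∨ e = d.symm) := by
  have hsymm : d = e.symm ↔ e = d.symm := by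
    rw [eq_comm, SimpleGraph.Dart.symm_involutive.eq_iff, eq_comm]
  rw [fisher, SimpleGraph.fromRel_adj, hsymm, eq_comm (a := d.toProd.1), or_self]

namespace IsDartTriangle

lemma swap (h : IsDartTriangle d e f) : IsDartTriangle d f e :=
  ⟨h.ne₁₃, h.ne₁₂, h.ne₂₃.symm, fun x => by rw [h.fst_eq_iff, or_comm (a := x = e)]⟩

lemma fst_eq₂ (h : IsDartTriangle d e f) : e.fst = d.fst :=
  (h.fst_eq_iff e).2 (.inr (.inl rfl))

lemma fst_eq₃ (h : IsDartTriangle d e f) : f.fst = d.fst :=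
  h.swap.fst_eq₂

lemma rotate (h : IsDartTriangle d e f) : IsDartTriangle e f d :=
  ⟨h.ne₂₃, h.ne₁₂.symm, h.ne₁₃.symm, fun x => by rw [h.fst_eq₂, h.fst_eq_iff]; tauto⟩

lemma neighborSet_fisher (h : IsDartTriangle d e f) :
    (fisher G).neighborSet d = {d.symm, e, f} := by
  ext x
  simp only [SimpleGraph.mem_neighborSet, fisher_adj_iff, h.fst_eq_iff, Set.mem_insert_iff,
    Set.mem_singleton_iff]
  have := h.ne₁₂
  have := h.ne₁₃
  have := d.symm_ne
  grind

lemma neighborSet_fst (h : IsDartTriangle d e f) :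
    G.neighborSet d.fst = {d.snd, e.snd, f.snd} := by
  ext w
  simp only [SimpleGraph.mem_neighborSet, Set.mem_insert_iff, Set.mem_singleton_iff]
  constructor
  · intro hw
    have hsnd (x : G.Dart) (hx : ⟨(d.fst, w), hw⟩ = x) : w = x.snd := hx ▸ rfl
    exact ((h.fst_eq_iff ⟨(d.fst, w), hw⟩).1 rfl).imp (hsnd d) (.imp (hsnd e) (hsnd f))
  · rintro (rfl | rfl | rfl)
    exacts [d.adj, h.fst_eq₂ ▸ e.adj, h.fst_eq₃ ▸ f.adj]

lemma snd_ne (h : IsDartTriangle d e f) : d.snd ≠ e.snd := fun hsnd =>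
  h.ne₁₂ (SimpleGraph.Dart.ext _ _ (Prod.ext h.fst_eq₂.symm hsnd))

lemma symm_ne (h : IsDartTriangle d e f) : d.symm ≠ e := fun hsymm =>
  d.fst_ne_snd (h.fst_eq₂.symm.trans (congrArg (·.fst) hsymm).symm)

lemma insert_preimage_fst (h : IsDartTriangle d e f) (A : Set V) :
    insert f (insert e (insert d ((·.fst) ⁻¹' A))) = ((·.fst) ⁻¹' insert d.fst A : Set G.Dart) := by
  ext x
  simp only [Set.mem_insert_iff, Set.mem_preimage, h.fst_eq_iff]
  tauto

end IsDartTriangle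

lemma finite_neighborSet_fisher (hcubic : ∀ v, (G.neighborSet v).ncard = 3) (d : G.Dart) :
    ((fisher G).neighborSet d).Finite := by
  obtain ⟨e, f, h⟩ := exists_isDartTriangle hcubic d
  rw [h.neighborSet_fisher]
  exact Set.toFinite _

end DartTriangle

section Comparison

variable {V : Type*} {G : SimpleGraph V} {d e f : G.Dart}

namespace IsDartTriangle

lemma tsum_neighborSet_fst (h : IsDartTriangle d e f) (g : V → ℝ≥0∞) :
    ∑' w : G.neighborSet d.fst, g w = g d.snd + (g e.snd + g f.snd) := by
  rw [h.neighborSet_fst,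
    tsum_insert_insert_singleton h.snd_ne h.swap.snd_ne h.rotate.snd_ne]

lemma tsum_neighborSet_fisher (h : IsDartTriangle d e f) (g : G.Dart → ℝ≥0∞) :
    ∑' w : (fisher G).neighborSet d, g w = g d.symm + (g e + g f) := by
  rw [h.neighborSet_fisher, tsum_insert_insert_singleton h.symm_ne h.swap.symm_ne h.ne₂₃]

lemma sawGenFun_insert_le (h : IsDartTriangle d e f) (z : ℝ≥0∞) (n : ℕ∞) (B : Set G.Dart) :
    sawGenFun (fisher G) z n (insert d B) e ≤
      1 + z + z * sawGenFun (fisher G) z n (insert e (insert d B)) e.symm +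
        z ^ 2 * sawGenFun (fisher G) z n (insert f (insert d B)) f.symm := by
  have hf : sawGenFun (fisher G) z n (insert e (insert d B)) f ≤
      1 + z * sawGenFun (fisher G) z n (insert f (insert d B)) f.symm := by
    grw [sawGenFun_mono le_self_add subset_rfl, sawGenFun_add_one_le,
      h.rotate.rotate.tsum_neighborSet_fisher, sawGenFun_of_mem (v := d) z n (by simp),
      sawGenFun_of_mem (v := e) z n (by simp), add_zero, add_zero,
      sawGenFun_mono le_rfl (Set.insert_subset_insert (Set.subset_insert e (insert d B)))]
  grw [sawGenFun_mono le_self_add subset_rfl, sawGenFun_add_one_le,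
    h.rotate.tsum_neighborSet_fisher, sawGenFun_of_mem (v := d) z n (by simp), add_zero, hf]
  exact le_of_eq (by ring)

theorem sawGenFun_fisher_add_one_le (h : IsDartTriangle d e f) (z : ℝ≥0∞) (n : ℕ∞)
    (B : Set G.Dart) :
    sawGenFun (fisher G) z (n + 1) B d ≤
      1 + 2 * z * (1 + z) + z * sawGenFun (fisher G) z n (insert d B) d.symm +
        (z ^ 2 + z ^ 3) * (sawGenFun (fisher G) z n (insert e (insert d B)) e.symm +
          sawGenFun (fisher G) z n (insert f (insert d B)) f.symm) := by
  grw [sawGenFun_add_one_le, h.tsum_neighborSet_fisher, h.sawGenFun_insert_le,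
    h.swap.sawGenFun_insert_le]
  exact le_of_eq (by ring)

lemma le_sawGenFun_insert (h : IsDartTriangle d e f) (z : ℝ≥0∞) {B : Set G.Dart} (he : e ∉ B)
    (hf : f ∉ B) :
    z * sawGenFun (fisher G) z ⊤ (insert f (insert e (insert d B))) e.symm +
        z ^ 2 * sawGenFun (fisher G) z ⊤ (insert f (insert e (insert d B))) f.symm ≤
      sawGenFun (fisher G) z ⊤ (insert d B) e := by
  have he' : e ∉ insert d B := by simp [he, h.ne₁₂.symm]
  have hf' : f ∉ insert e (insert d B) := by simp [hf, h.ne₁₃.symm, h.ne₂₃.symm]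
  have hthird : z * sawGenFun (fisher G) z ⊤ (insert f (insert e (insert d B))) f.symm ≤
      sawGenFun (fisher G) z ⊤ (insert e (insert d B)) f := by
    rw [← top_add 1, sawGenFun_add_one z ⊤ hf', h.rotate.rotate.tsum_neighborSet_fisher, top_add]
    grw [← le_self_add (b := sawGenFun (fisher G) z ⊤ _ d + _)]
    exact le_add_self
  rw [← top_add 1, sawGenFun_add_one z ⊤ he', h.rotate.tsum_neighborSet_fisher, top_add,
    sawGenFun_of_mem (v := d) z ⊤ (by simp), add_zero]
  grw [← hthird, sawGenFun_mono le_rfl (Set.subset_insert f (insert e (insert d B))) e.symm,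
    ← le_add_self]
  exact le_of_eq (by ring)

theorem le_sawGenFun_fisher (h : IsDartTriangle d e f) (z : ℝ≥0∞) {A : Set V} (hA : d.fst ∉ A) :
    1 + z * sawGenFun (fisher G) z ⊤ ((·.fst) ⁻¹' insert d.fst A) d.symm +
        (z ^ 2 + z ^ 3) * (sawGenFun (fisher G) z ⊤ ((·.fst) ⁻¹' insert d.fst A) e.symm +
          sawGenFun (fisher G) z ⊤ ((·.fst) ⁻¹' insert d.fst A) f.symm) ≤
      sawGenFun (fisher G) z ⊤ ((·.fst) ⁻¹' A) d := by
  rw [← h.insert_preimage_fst A]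
  set B : Set G.Dart := (·.fst) ⁻¹' A
  have he : e ∉ B := fun he => hA (h.fst_eq₂ ▸ he)
  have hf : f ∉ B := fun hf => hA (h.fst_eq₃ ▸ hf)
  have hinsert : insert d B ⊆ insert f (insert e (insert d B)) :=
    (Set.subset_insert _ _).trans (Set.subset_insert _ _)
  have hthird := h.swap.le_sawGenFun_insert z hf he
  rw [Set.insert_comm e f] at hthird
  rw [← top_add 1, sawGenFun_add_one z ⊤ (show d ∉ B from hA), h.tsum_neighborSet_fisher, top_add]
  grw [← h.le_sawGenFun_insert z he hf, ← hthird, sawGenFun_mono le_rfl hinsert d.symm]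
  exact le_of_eq (by ring)

end IsDartTriangle

theorem sawGenFun_natCast_le_sawGenFun_fisher (hcubic : ∀ v, (G.neighborSet v).ncard = 3) (z : ℝ≥0∞)
    (n : ℕ) {A : Set V} (hd : d.snd ∈ A) :
    sawGenFun G (z ^ 2 + z ^ 3) n A d.fst ≤
      sawGenFun (fisher G) z ⊤ ((·.fst) ⁻¹' A) d := by
  induction n generalizing A d with
  | zero => simp [sawGenFun_zero]
  | succ n ih =>
    by_cases hA : d.fst ∈ A
    · simp [sawGenFun_of_mem _ _ hA]
    obtain ⟨e, f, h⟩ := exists_isDartTriangle hcubic d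
    have he := ih (d := e.symm) (A := insert d.fst A) (.inl h.fst_eq₂)
    have hf := ih (d := f.symm) (A := insert d.fst A) (.inl h.fst_eq₃)
    grw [Nat.cast_succ, sawGenFun_add_one _ _ hA, h.tsum_neighborSet_fst,
      sawGenFun_of_mem (v := d.snd) _ _ (.inr hd), zero_add, ← h.le_sawGenFun_fisher z hA,
      ← he, ← hf, ← le_self_add (a := 1)]
    rfl

theorem sawGenFun_le_sawGenFun_fisher (hcubic : ∀ v, (G.neighborSet v).ncard = 3) (z : ℝ≥0∞)
    {A : Set V} (hd : d.snd ∈ A) :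
    sawGenFun G (z ^ 2 + z ^ 3) ⊤ A d.fst ≤ sawGenFun (fisher G) z ⊤ ((·.fst) ⁻¹' A) d :=
  sawGenFun_top_le fun n => sawGenFun_natCast_le_sawGenFun_fisher hcubic z n hd

theorem mul_sawGenFun_le_mul_sawGenFun_fisher (hcubic : ∀ v, (G.neighborSet v).ncard = 3) (z : ℝ≥0∞)
    (d : G.Dart) :
    z * sawGenFun G (z ^ 2 + z ^ 3) ⊤ ∅ d.fst ≤
      (z + (z ^ 2 + z ^ 3)) * sawGenFun (fisher G) z ⊤ ∅ d := by
  obtain ⟨e, f, h⟩ := exists_isDartTriangle hcubic d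
  have hstep := h.le_sawGenFun_fisher z (Set.notMem_empty d.fst)
  have hd := sawGenFun_le_sawGenFun_fisher hcubic z (d := d.symm) (A := {d.fst}) rfl
  have he := sawGenFun_le_sawGenFun_fisher hcubic z (d := e.symm) (A := {d.fst}) h.fst_eq₂
  have hf := sawGenFun_le_sawGenFun_fisher hcubic z (d := f.symm) (A := {d.fst}) h.fst_eq₃
  rw [Set.preimage_empty, insert_empty_eq] at hstep
  rw [← top_add 1, sawGenFun_add_one _ _ (Set.notMem_empty _), insert_empty_eq,
    h.tsum_neighborSet_fst, top_add]
  grw [← hstep, ← hd, ← he, ← hf]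
  simp only [SimpleGraph.Dart.symm_toProd, Prod.fst_swap]
  generalize z ^ 2 + z ^ 3 = x
  generalize sawGenFun G x ⊤ {d.fst} d.snd = a, sawGenFun G x ⊤ {d.fst} e.snd + _ = b
  calc z * (1 + x * (a + b)) ≤ z * (1 + x * (a + b)) + (x + z ^ 2 * a + x ^ 2 * b) := le_self_add
    _ = (z + x) * (1 + z * a + x * b) := by ring

lemma IsDartTriangle.sawGenFun_fisher_le_one (h : IsDartTriangle d e f) (z : ℝ≥0∞) (n : ℕ∞)
    {B : Set G.Dart} (hB : (B ∩ {x | x.fst = d.fst}).Nontrivial) (hd : d.symm ∈ B) :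
    sawGenFun (fisher G) z n B d ≤ 1 := by
  by_cases hdB : d ∈ B
  · simp [sawGenFun_of_mem z n hdB]
  obtain ⟨he, hf⟩ : e ∈ B ∧ f ∈ B := by
    obtain ⟨x, ⟨hxB, hx⟩, y, ⟨hyB, hy⟩, hxy⟩ := hB
    have hx := (h.fst_eq_iff x).1 hx
    have hy := (h.fst_eq_iff y).1 hy
    grind
  grw [sawGenFun_mono le_self_add subset_rfl, sawGenFun_add_one_le, h.tsum_neighborSet_fisher,
    sawGenFun_of_mem z n (.inr hd), sawGenFun_of_mem z n (.inr he), sawGenFun_of_mem z n (.inr hf)]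
  simp

-- The hypothesis on `B` is the invariant of the induction: on leaving a triangle, a walk has used
-- up two of its three darts, so that it must end as soon as it enters this triangle again.
theorem sawGenFun_natCast_fisher_le (hcubic : ∀ v, (G.neighborSet v).ncard = 3) (z : ℝ≥0∞)
    (n : ℕ) {A : Set V} {B : Set G.Dart} (hAB : ∀ w ∈ A, (B ∩ {x | x.fst = w}).Nontrivial)
    (hd : d.symm ∈ B) :
    sawGenFun (fisher G) z n B d ≤
      1 + 2 * z * (1 + z) ^ 2 * sawGenFun G (z ^ 2 + z ^ 3) ⊤ A d.fst := by
  induction n generalizing A B d with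
  | zero => simp [sawGenFun_zero]
  | succ n ih =>
    obtain ⟨e, f, h⟩ := exists_isDartTriangle hcubic d
    by_cases hA : d.fst ∈ A
    · exact (h.sawGenFun_fisher_le_one z _ (hAB _ hA) hd).trans le_self_add
    have hAB' {x : G.Dart} (hx : x.fst = d.fst) (hxd : x ≠ d) :
        ∀ w ∈ insert d.fst A, (insert x (insert d B) ∩ {x | x.fst = w}).Nontrivial := by
      rintro w (rfl | hw)
      · exact ⟨x, ⟨.inl rfl, hx⟩, d, ⟨.inr (.inl rfl), rfl⟩, hxd⟩
      · exact (hAB w hw).mono (Set.inter_subset_inter_left _ fun y hy => .inr (.inr hy))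
    have he := ih (d := e.symm) (hAB' h.fst_eq₂ h.ne₁₂.symm) (by simp)
    have hf := ih (d := f.symm) (hAB' h.fst_eq₃ h.ne₁₃.symm) (by simp)
    rw [← top_add 1, sawGenFun_add_one _ _ hA, h.tsum_neighborSet_fst]
    grw [Nat.cast_succ, h.sawGenFun_fisher_add_one_le, sawGenFun_of_mem z n (.inr hd), he, hf,
      ← le_add_self (b := sawGenFun G (z ^ 2 + z ^ 3) ⊤ (insert d.fst A) d.snd)]
    simp only [SimpleGraph.Dart.symm_toProd, Prod.fst_swap]
    exact le_of_eq (by ring)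

theorem sawGenFun_fisher_le (hcubic : ∀ v, (G.neighborSet v).ncard = 3) (z : ℝ≥0∞)
    {B : Set G.Dart} (hd : d.symm ∈ B) :
    sawGenFun (fisher G) z ⊤ B d ≤
      1 + 2 * z * (1 + z) ^ 2 * sawGenFun G (z ^ 2 + z ^ 3) ⊤ ∅ d.fst :=
  sawGenFun_top_le fun n => sawGenFun_natCast_fisher_le hcubic z n (by simp) hd

end Comparison

section CriticalPoint

variable {V : Type*} {G : SimpleGraph V}

theorem sawGenFun_fisher_ne_top (hcubic : ∀ v, (G.neighborSet v).ncard = 3) {z : ℝ≥0} (hz : z ≠ 0)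
    {d : G.Dart} (hd : sawGenFun G (z ^ 2 + z ^ 3) ⊤ ∅ d.fst ≠ ⊤) :
    sawGenFun (fisher G) z ⊤ ∅ d ≠ ⊤ := by
  have hsnd {x : G.Dart} (hx : x.fst = d.fst) : sawGenFun G (z ^ 2 + z ^ 3) ⊤ ∅ x.snd ≠ ⊤ :=
    sawGenFun_ne_top_of_reachable (by simp [hz]) (hx ▸ x.adj.reachable) hd
  have hbound {x : G.Dart} (hx : x.fst = d.fst) {B : Set G.Dart} (hxB : x ∈ B) :
      sawGenFun (fisher G) z ⊤ B x.symm ≠ ⊤ :=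
    ne_top_of_le_ne_top
      (by finiteness [hsnd hx]) (sawGenFun_fisher_le hcubic z (d := x.symm) (by simpa using hxB))
  obtain ⟨e, f, h⟩ := exists_isDartTriangle hcubic d
  have hstep := h.sawGenFun_fisher_add_one_le z ⊤ ∅
  rw [top_add] at hstep
  exact ne_top_of_le_ne_top (ENNReal.add_ne_top.2
    ⟨ENNReal.add_ne_top.2
        ⟨by finiteness, ENNReal.mul_ne_top (by finiteness) (hbound rfl (.inl rfl))⟩,
      ENNReal.mul_ne_top (by finiteness) (ENNReal.add_ne_top.2
        ⟨hbound h.fst_eq₂ (.inl rfl), hbound h.fst_eq₃ (.inl rfl)⟩)⟩) hstep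

theorem sawGenFun_ne_top_of_fisher (hcubic : ∀ v, (G.neighborSet v).ncard = 3) {z : ℝ≥0}
    (hz : z ≠ 0) {d : G.Dart} (hd : sawGenFun (fisher G) z ⊤ ∅ d ≠ ⊤) :
    sawGenFun G (z ^ 2 + z ^ 3) ⊤ ∅ d.fst ≠ ⊤ := fun htop =>
  absurd (mul_sawGenFun_le_mul_sawGenFun_fisher hcubic z d) <| by
    rw [htop, ENNReal.mul_top (mod_cast hz), not_le]
    finiteness

theorem sawRadius_fst_eq (hcubic : ∀ v, (G.neighborSet v).ncard = 3) (d : G.Dart) :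
    sawRadius G d.fst = sawRadius (fisher G) d ^ 2 + sawRadius (fisher G) d ^ 3 := by
  have hG := finite_neighborSet hcubic
  have hF := finite_neighborSet_fisher hcubic
  refine eq_sq_add_cube_of_forall_lt (fun z hz₀ hz => ?_) fun z hz₀ hz => ?_
  · have hfin : sawGenFun G (z ^ 2 + z ^ 3 : ℝ≥0) ⊤ ∅ d.fst ≠ ⊤ :=
      mod_cast sawGenFun_ne_top_of_fisher hcubic hz₀ (sawGenFun_ne_top_of_lt_sawRadius hF hz)
    exact mod_cast le_sawRadius hG hfin
  · have hlt : (z ^ 2 + z ^ 3 : ℝ≥0) < sawRadius G d.fst := mod_cast hz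
    have hfin := sawGenFun_ne_top_of_lt_sawRadius hG hlt
    exact le_sawRadius hF (sawGenFun_fisher_ne_top hcubic hz₀ (mod_cast hfin))

end CriticalPoint

theorem fisher_connective_constant_general {V : Type*} (G : SimpleGraph V) [Infinite V]
    (hconn : G.Connected) (hcubic : ∀ v : V, (G.neighborSet v).ncard = 3)
    (v : V) (d : G.Dart) (μ μ' : ℝ)
    (hμ : Tendsto (fun n : ℕ => (sawCount G v n : ℝ) ^ ((1 : ℝ) / n)) atTop (nhds μ))
    (hμ' : Tendsto (fun n : ℕ => (sawCount (fisher G) d n : ℝ) ^ ((1 : ℝ) / n)) atTop (nhds μ')) :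
    1 / μ = (1 / μ') ^ 2 + (1 / μ') ^ 3 := by
  have hG := finite_neighborSet hcubic
  have hradius : sawRadius G v = sawRadius (fisher G) d ^ 2 + sawRadius (fisher G) d ^ 3 :=
    (sawRadius_eq_of_reachable hG (hconn v d.fst)).trans (sawRadius_fst_eq hcubic d)
  have hfin := ne_top_of_le_ne_top ENNReal.one_ne_top (sawRadius_le_one hconn hG v)
  rw [hradius, ENNReal.add_ne_top] at hfin
  rw [← toReal_sawRadius_of_tendsto hμ, ← toReal_sawRadius_of_tendsto hμ', hradius,
    ENNReal.toReal_add hfin.1 hfin.2, ENNReal.toReal_pow, ENNReal.toReal_pow]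

/-- The Fisher transformation of an infinite, connected, quasi-transitive, cubic graph
satisfies `1/μ = (1/μ')² + (1/μ')³` where `μ, μ'` are the connective constants of `G`, `F(G)`. -/
theorem fisher_connective_constant {V : Type*} (G : SimpleGraph V) [Infinite V]
    (hconn : G.Connected)
    (hqt : ∃ W : Finset V, ∀ v : V, ∃ w ∈ W, ∃ γ : G ≃g G, γ v = w)
    (hcubic : ∀ v : V, (G.neighborSet v).ncard = 3)
    (v : V) (d : G.Dart) (μ μ' : ℝ)
    (hμ : Tendsto (fun n : ℕ => (sawCount G v n : ℝ) ^ ((1 : ℝ) / n)) atTop (nhds μ))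
    (hμ' : Tendsto (fun n : ℕ => (sawCount (fisher G) d n : ℝ) ^ ((1 : ℝ) / n)) atTop (nhds μ')) :
    1 / μ = (1 / μ') ^ 2 + (1 / μ') ^ 3 :=
  fisher_connective_constant_general G hconn hcubic v d μ μ' hμ hμ'
end

section
/- Let φ = (1+√5)/2 be the golden mean. Let (μ_k)_{k≥0} be a sequence of real numbers such that μ_k ≥ 1 for all k, μ_0 ≤ 2, and 1/μ_k = (1/μ_{k+1})² + (1/μ_{k+1})³ for all k ≥ 0. Then the sequence (μ_k) is monotone and converges to φ, and for all k ≥ 1, −(4/7)^k ≤ 1/μ_k − 1/φ ≤ ((7−√5)/2)^{−k}. -/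
open Filter

/-!
Put `x k = 1 / μ k`, so that `x` is a backward orbit of `g t = t ^ 2 + t ^ 3`, whose only positive
fixed point is `φ⁻¹`. The chord of `g` from `φ⁻¹` to `t` has slope `t ^ 2 + φ * t + 1`, which
exceeds `1` and increases with `t > 0`. Hence `φ⁻¹` repels under `g`, and `x` approaches it from
one side. If `x ≥ m` throughout, the distance to `φ⁻¹` shrinks at each step by at least the slope at
`m`: taking `m` to be the smaller of `x 0` and `φ⁻¹` gives convergence, `m = 1 / 2` gives the rate
`4 / 7`, and for orbits above `φ⁻¹` the choice `m = φ⁻¹` gives the rate `2 / (7 - √5)`.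
-/

section

open Real Topology
open scoped goldenRatio

lemma inv_goldenRatio_eq_sub_one : φ⁻¹ = φ - 1 := by
  rw [inv_goldenRatio, ← one_sub_goldenConj, neg_sub]

/-- The polynomial `g` of the Fisher transformation: replacing a cubic graph by its Fisher graph
turns the inverse connective constant `x` into a solution `y` of `fisherMap y = x`. -/
def fisherMap (x : ℝ) : ℝ := x ^ 2 + x ^ 3

/-- The slope of the chord of `fisherMap` joining its fixed point `φ⁻¹` to `x`, written as a
polynomial so that it is also meaningful (and equal to the derivative) at `x = φ⁻¹`. -/
noncomputable def fisherSlope (x : ℝ) : ℝ := x ^ 2 + φ * x + 1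

lemma fisherMap_sub_inv_goldenRatio (x : ℝ) :
    fisherMap x - φ⁻¹ = fisherSlope x * (x - φ⁻¹) := by
  rw [fisherMap, fisherSlope, inv_goldenRatio_eq_sub_one]
  linear_combination x * goldenRatio_sq

lemma fisherMap_sub_self (x : ℝ) : fisherMap x - x = x * (x + φ) * (x - φ⁻¹) := by
  rw [fisherMap, inv_goldenRatio_eq_sub_one]
  linear_combination x * goldenRatio_sq

lemma fisherMap_le_self {x : ℝ} (hx : 0 ≤ x) (h : x ≤ φ⁻¹) : fisherMap x ≤ x := by
  rw [← sub_nonpos, fisherMap_sub_self]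
  exact mul_nonpos_of_nonneg_of_nonpos (mul_nonneg hx (add_nonneg hx goldenRatio_pos.le))
    (sub_nonpos.2 h)

lemma self_le_fisherMap {x : ℝ} (h : φ⁻¹ ≤ x) : x ≤ fisherMap x := by
  have hx : 0 ≤ x := (inv_nonneg.2 goldenRatio_pos.le).trans h
  rw [← sub_nonneg, fisherMap_sub_self]
  exact mul_nonneg (mul_nonneg hx (add_nonneg hx goldenRatio_pos.le)) (sub_nonneg.2 h)

lemma fisherSlope_mono {x y : ℝ} (hx : 0 ≤ x) (hxy : x ≤ y) : fisherSlope x ≤ fisherSlope y := by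
  have := goldenRatio_pos
  unfold fisherSlope
  gcongr

lemma fisherSlope_pos (x : ℝ) : 0 < fisherSlope x := by
  have hsquare : fisherSlope x = (x + φ / 2) ^ 2 + (2 - φ) * (2 + φ) / 4 := by
    rw [fisherSlope]
    ring
  have := goldenRatio_pos
  have hφ : 0 < 2 - φ := sub_pos.2 goldenRatio_lt_two
  rw [hsquare]
  positivity

lemma one_lt_fisherSlope {x : ℝ} (hx : 0 < x) : 1 < fisherSlope x := by
  have := goldenRatio_pos
  exact lt_add_of_pos_left 1 (by positivity)

lemma inv_goldenRatio_le_fisherMap_iff {x : ℝ} : φ⁻¹ ≤ fisherMap x ↔ φ⁻¹ ≤ x := by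
  rw [← sub_nonneg, fisherMap_sub_inv_goldenRatio, mul_nonneg_iff_of_pos_left (fisherSlope_pos x),
    sub_nonneg]

lemma fisherMap_le_inv_goldenRatio_iff {x : ℝ} : fisherMap x ≤ φ⁻¹ ↔ x ≤ φ⁻¹ := by
  rw [← sub_nonneg, ← neg_sub, fisherMap_sub_inv_goldenRatio, ← mul_neg, neg_sub,
    mul_nonneg_iff_of_pos_left (fisherSlope_pos x), sub_nonneg]

lemma fisherSlope_inv_goldenRatio : fisherSlope φ⁻¹ = (7 - √5) / 2 := by
  rw [fisherSlope, mul_inv_cancel₀ goldenRatio_ne_zero, inv_goldenRatio_eq_sub_one, sub_sq,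
    goldenRatio_sq]
  ring

lemma inv_fisherSlope_half_le : (fisherSlope (1 / 2))⁻¹ ≤ 4 / 7 := by
  apply inv_le_of_inv_le₀ (by norm_num)
  rw [fisherSlope]
  linarith [one_lt_goldenRatio]

/-- A positive backward orbit of `fisherMap`, such as the inverse connective constants of the
iterated Fisher transforms of a cubic graph. -/
structure IsFisherBackwardOrbit (x : ℕ → ℝ) : Prop where
  pos : ∀ k, 0 < x k
  fisherMap_succ : ∀ k, fisherMap (x (k + 1)) = x k

namespace IsFisherBackwardOrbit

variable {x : ℕ → ℝ}

lemma inv_goldenRatio_le (hx : IsFisherBackwardOrbit x) (h : φ⁻¹ ≤ x 0) (k : ℕ) : φ⁻¹ ≤ x k := by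
  induction k with
  | zero => exact h
  | succ k ih =>
    rwa [← inv_goldenRatio_le_fisherMap_iff, hx.fisherMap_succ]

lemma le_inv_goldenRatio (hx : IsFisherBackwardOrbit x) (h : x 0 ≤ φ⁻¹) (k : ℕ) : x k ≤ φ⁻¹ := by
  induction k with
  | zero => exact h
  | succ k ih =>
    rwa [← fisherMap_le_inv_goldenRatio_iff, hx.fisherMap_succ]

lemma antitone (hx : IsFisherBackwardOrbit x) (h : φ⁻¹ ≤ x 0) : Antitone x :=
  antitone_nat_of_succ_le fun k =>
    (self_le_fisherMap (hx.inv_goldenRatio_le h _)).trans_eq (hx.fisherMap_succ k)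

lemma monotone (hx : IsFisherBackwardOrbit x) (h : x 0 ≤ φ⁻¹) : Monotone x :=
  monotone_nat_of_le_succ fun k =>
    (hx.fisherMap_succ k).ge.trans (fisherMap_le_self (hx.pos _).le (hx.le_inv_goldenRatio h _))

lemma antitone_or_monotone (hx : IsFisherBackwardOrbit x) : Antitone x ∨ Monotone x :=
  (le_total φ⁻¹ (x 0)).imp hx.antitone hx.monotone

lemma le_apply (hx : IsFisherBackwardOrbit x) {m : ℝ} (hm : m ≤ x 0) (hmφ : m ≤ φ⁻¹) (k : ℕ) :
    m ≤ x k := by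
  rcases le_total φ⁻¹ (x 0) with h | h
  · exact hmφ.trans (hx.inv_goldenRatio_le h k)
  · exact hm.trans (hx.monotone h k.zero_le)

lemma abs_sub_le (hx : IsFisherBackwardOrbit x) {m : ℝ} (hm0 : 0 ≤ m) (hm : m ≤ x 0)
    (hmφ : m ≤ φ⁻¹) (k : ℕ) :
    |x k - φ⁻¹| ≤ (fisherSlope m)⁻¹ ^ k * |x 0 - φ⁻¹| := by
  have hs : 0 < fisherSlope m := fisherSlope_pos m
  refine le_geom (u := fun k => |x k - φ⁻¹|) (inv_nonneg.2 hs.le) k fun j _ => ?_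
  rw [le_inv_mul_iff₀ hs]
  calc fisherSlope m * |x (j + 1) - φ⁻¹|
      ≤ fisherSlope (x (j + 1)) * |x (j + 1) - φ⁻¹| := by
        gcongr
        exact fisherSlope_mono hm0 (hx.le_apply hm hmφ _)
    _ = |x j - φ⁻¹| := by
        rw [← hx.fisherMap_succ j, fisherMap_sub_inv_goldenRatio, abs_mul,
          abs_of_pos (fisherSlope_pos _)]

lemma tendsto (hx : IsFisherBackwardOrbit x) : Tendsto x atTop (𝓝 φ⁻¹) := by
  have hm : 0 < min (x 0) φ⁻¹ := lt_min (hx.pos 0) (inv_pos.2 goldenRatio_pos)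
  have hs : 1 < fisherSlope (min (x 0) φ⁻¹) := one_lt_fisherSlope hm
  have hgeom := (tendsto_pow_atTop_nhds_zero_of_lt_one (inv_nonneg.2 (zero_le_one.trans hs.le))
    (inv_lt_one_of_one_lt₀ hs)).mul_const |x 0 - φ⁻¹|
  rw [zero_mul] at hgeom
  rw [tendsto_iff_norm_sub_tendsto_zero]
  exact squeeze_zero (fun _ => norm_nonneg _)
    (hx.abs_sub_le hm.le (min_le_left _ _) (min_le_right _ _)) hgeom

lemma neg_pow_le_sub (hx : IsFisherBackwardOrbit x) {m : ℝ} (hm0 : 0 ≤ m) (hm : m ≤ x 0)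
    (hmφ : m ≤ φ⁻¹) (k : ℕ) :
    -(fisherSlope m)⁻¹ ^ k ≤ x k - φ⁻¹ := by
  have hpow : 0 ≤ (fisherSlope m)⁻¹ ^ k := pow_nonneg (inv_nonneg.2 (fisherSlope_pos m).le) k
  rcases le_total φ⁻¹ (x 0) with h | h
  · exact (neg_nonpos.2 hpow).trans (sub_nonneg.2 (hx.inv_goldenRatio_le h k))
  · have hdist : |x 0 - φ⁻¹| ≤ 1 := by
      rw [abs_of_nonpos (sub_nonpos.2 h)]
      linarith [hx.pos 0, inv_lt_one_of_one_lt₀ one_lt_goldenRatio]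
    exact (abs_le.1 ((hx.abs_sub_le hm0 hm hmφ k).trans (mul_le_of_le_one_right hpow hdist))).1

lemma sub_le_pow (hx : IsFisherBackwardOrbit x) (h0 : x 0 ≤ φ) (k : ℕ) :
    x k - φ⁻¹ ≤ (fisherSlope φ⁻¹)⁻¹ ^ k := by
  have hφ : 0 ≤ φ⁻¹ := inv_nonneg.2 goldenRatio_pos.le
  have hpow : 0 ≤ (fisherSlope φ⁻¹)⁻¹ ^ k := pow_nonneg (inv_nonneg.2 (fisherSlope_pos _).le) k
  rcases le_total φ⁻¹ (x 0) with h | h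
  · have hdist : |x 0 - φ⁻¹| ≤ 1 := by
      rw [abs_of_nonneg (sub_nonneg.2 h)]
      linarith [inv_goldenRatio_eq_sub_one]
    exact (le_abs_self _).trans
      ((hx.abs_sub_le hφ h le_rfl k).trans (mul_le_of_le_one_right hpow hdist))
  · exact (sub_nonpos.2 (hx.le_inv_goldenRatio h k)).trans hpow

lemma neg_four_sevenths_pow_le_sub (hx : IsFisherBackwardOrbit x) (h0 : 1 / 2 ≤ x 0) (k : ℕ) :
    -(4 / 7) ^ k ≤ x k - φ⁻¹ := by
  have hhalf : 1 / 2 ≤ φ⁻¹ := by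
    rw [one_div]
    exact inv_anti₀ goldenRatio_pos goldenRatio_lt_two.le
  have hrate : (fisherSlope (1 / 2))⁻¹ ^ k ≤ (4 / 7) ^ k :=
    pow_le_pow_left₀ (inv_nonneg.2 (fisherSlope_pos _).le) inv_fisherSlope_half_le k
  exact (neg_le_neg hrate).trans (hx.neg_pow_le_sub (by norm_num) h0 hhalf k)

end IsFisherBackwardOrbit

theorem fisher_iteration_golden_mean_general (μ : ℕ → ℝ) (hpos : ∀ k, 0 < μ k)
    (hrec : ∀ k, 1 / μ k = (1 / μ (k + 1)) ^ 2 + (1 / μ (k + 1)) ^ 3) :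
    (Monotone μ ∨ Antitone μ) ∧
    Tendsto μ atTop (𝓝 φ) ∧
    (μ 0 ≤ 2 → ∀ k, -(4 / 7 : ℝ) ^ k ≤ 1 / μ k - 1 / φ) ∧
    (1 / φ ≤ μ 0 → ∀ k : ℕ, 1 / μ k - 1 / φ ≤ ((7 - √5) / 2) ^ (-(k : ℤ))) := by
  simp only [one_div] at hrec ⊢
  have hx : IsFisherBackwardOrbit fun k => (μ k)⁻¹ :=
    ⟨fun k => inv_pos.2 (hpos k), fun k => (hrec k).symm⟩
  refine ⟨?_, ?_, fun h0 => hx.neg_four_sevenths_pow_le_sub ?_, fun h0 k => ?_⟩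
  · exact hx.antitone_or_monotone.imp
      (fun h i j hij => (inv_le_inv₀ (hpos j) (hpos i)).1 (h hij))
      (fun h i j hij => (inv_le_inv₀ (hpos i) (hpos j)).1 (h hij))
  · simpa using hx.tendsto.inv₀ (inv_ne_zero goldenRatio_ne_zero)
  · rw [one_div]
    exact inv_anti₀ (hpos 0) h0
  · rw [zpow_neg, zpow_natCast, ← inv_pow, ← fisherSlope_inv_goldenRatio]
    exact hx.sub_le_pow (inv_le_of_inv_le₀ goldenRatio_pos h0) k

end

/-- The analytic content of the iterated Fisher transformation: if `μ_k ≥ 1`, `μ_0 ≤ 2`,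
and `1/μ_k = (1/μ_{k+1})² + (1/μ_{k+1})³` for all `k`, then `(μ_k)` is monotone, converges
to the golden mean `φ = (1+√5)/2`, and `−(4/7)^k ≤ 1/μ_k − 1/φ ≤ ((7−√5)/2)^{−k}` for `k ≥ 1`. -/
theorem fisher_iteration_golden_mean (μ : ℕ → ℝ)
    (h1 : ∀ k, 1 ≤ μ k) (h0 : μ 0 ≤ 2)
    (hrec : ∀ k, 1 / μ k = (1 / μ (k + 1)) ^ 2 + (1 / μ (k + 1)) ^ 3) :
    (Monotone μ ∨ Antitone μ) ∧
    Tendsto μ atTop (nhds ((1 + Real.sqrt 5) / 2)) ∧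
    ∀ k : ℕ, 1 ≤ k →
      -((4 / 7 : ℝ)) ^ k ≤ 1 / μ k - 1 / ((1 + Real.sqrt 5) / 2) ∧
      1 / μ k - 1 / ((1 + Real.sqrt 5) / 2) ≤ ((7 - Real.sqrt 5) / 2) ^ (-(k : ℤ)) := by
  obtain ⟨hmono, hlim, hlower, hupper⟩ :=
    fisher_iteration_golden_mean_general μ (fun k => one_pos.trans_le (h1 k)) hrec
  have hφ : 1 / Real.goldenRatio ≤ μ 0 :=
    (div_le_self zero_le_one Real.one_lt_goldenRatio.le).trans (h1 0)
  exact ⟨hmono, hlim, fun k _ => ⟨hlower h0 k, hupper hφ k⟩⟩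
end

section
/- Let Δ ≥ 2 and let G be an infinite, connected, Δ-regular, vertex-transitive simple graph. If σ_n(v)^{1/n} → μ as n → ∞ for some vertex v, then μ ≥ √(Δ−1). -/
open Filter

/-!
In an infinite connected vertex-transitive graph of degree `Δ`, every finite nonempty vertex set
has at least `Δ` boundary edges (Mader's argument: translates of an atom are equal or disjoint, so
an atom induces a regular graph). Build a self-avoiding walk step by step, keeping a finite set `T`
that contains the visited vertices and whose complement has no finite component, so that the walk
never gets trapped. When the walk at `x ∉ T` absorbs `x` and the finite components this cuts off
and then has `d` ways to leave, the number of boundary edges of `T` grows by at most `2 * d - Δ`.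
As it stays nonnegative, `d` is at least `Δ / 2` on average, and since `d ≤ Δ - 1`, concavity of
`log` turns this into a geometric mean of at least `√(Δ - 1)`.
-/

open Finset Asymptotics

section CutSize

variable {V W : Type*} {G : SimpleGraph V} {H : SimpleGraph W} [G.LocallyFinite] [H.LocallyFinite]

lemma map_neighborFinset (f : G ≃g H) (x : V) :
    (G.neighborFinset x).map f.toEquiv.toEmbedding = H.neighborFinset (f x) := by
  ext y
  rw [mem_map_equiv, G.mem_neighborFinset, H.mem_neighborFinset, ← f.map_adj_iff]
  exact iff_of_eq (congrArg _ (f.apply_symm_apply y))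

variable [DecidableEq V] [DecidableEq W]

variable (G) in
/-- The number of edges of `G` in the boundary of the finite vertex set `A`, each counted from its
endpoint inside `A`. -/
def cutSize (A : Finset V) : ℕ := ∑ a ∈ A, #(G.neighborFinset a \ A)

lemma cutSize_union_add_cutSize_inter_le (A B : Finset V) :
    cutSize G (A ∪ B) + cutSize G (A ∩ B) ≤ cutSize G A + cutSize G B := by
  have hA : ∑ a ∈ A \ B, #(G.neighborFinset a \ (A ∪ B)) ≤
      ∑ a ∈ A \ B, #(G.neighborFinset a \ A) := by
    gcongr; exact subset_union_left
  have hB : ∑ a ∈ B \ A, #(G.neighborFinset a \ (A ∪ B)) ≤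
      ∑ a ∈ B \ A, #(G.neighborFinset a \ B) := by
    gcongr; exact subset_union_right
  have hAB : ∑ a ∈ A ∩ B, #(G.neighborFinset a \ (A ∪ B)) + cutSize G (A ∩ B) =
      ∑ a ∈ A ∩ B, #(G.neighborFinset a \ A) + ∑ a ∈ A ∩ B, #(G.neighborFinset a \ B) := by
    simp only [cutSize, ← sum_add_distrib, sdiff_union_distrib, sdiff_inter_distrib_right]
    exact sum_congr rfl fun a _ ↦ card_inter_add_card_union _ _
  calc cutSize G (A ∪ B) + cutSize G (A ∩ B)
      = ∑ a ∈ A \ B, #(G.neighborFinset a \ (A ∪ B)) +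
          ∑ a ∈ B \ A, #(G.neighborFinset a \ (A ∪ B)) +
          (∑ a ∈ A ∩ B, #(G.neighborFinset a \ (A ∪ B)) + cutSize G (A ∩ B)) := by
        rw [cutSize, ← sdiff_union_self_eq_union, sum_union sdiff_disjoint,
          ← sum_inter_add_sum_sdiff B A, inter_comm B A, sdiff_union_self_eq_union]
        ring
    _ ≤ ∑ a ∈ A \ B, #(G.neighborFinset a \ A) + ∑ a ∈ B \ A, #(G.neighborFinset a \ B) +
          (∑ a ∈ A ∩ B, #(G.neighborFinset a \ A) + ∑ a ∈ A ∩ B, #(G.neighborFinset a \ B)) := by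
        rw [hAB]; gcongr
    _ = cutSize G A + cutSize G B := by
        rw [cutSize, cutSize, ← sum_inter_add_sum_sdiff A B, ← sum_inter_add_sum_sdiff B A,
          inter_comm B A]
        ring

lemma sum_card_neighborFinset_inter_comm (A B : Finset V) :
    ∑ a ∈ A, #(G.neighborFinset a ∩ B) = ∑ b ∈ B, #(G.neighborFinset b ∩ A) := by
  classical
  convert sum_card_bipartiteAbove_eq_sum_card_bipartiteBelow (s := A) (t := B) G.Adj using 3
  · ext; simp [bipartiteAbove, and_comm]
  · ext; simp [bipartiteBelow, and_comm, G.adj_comm]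

lemma cutSize_union_add_cutSize {T A : Finset V} (h : Disjoint T A) :
    cutSize G (T ∪ A) + cutSize G A =
      cutSize G T + 2 * ∑ a ∈ A, #(G.neighborFinset a \ (T ∪ A)) := by
  have sdiff_split {B C : Finset V} (hBC : Disjoint B C) : cutSize G B =
      ∑ b ∈ B, #(G.neighborFinset b \ (B ∪ C)) + ∑ b ∈ B, #(G.neighborFinset b ∩ C) := by
    rw [cutSize, ← sum_add_distrib]
    refine sum_congr rfl fun b _ ↦ ?_
    have hC : G.neighborFinset b \ B ∩ C = G.neighborFinset b ∩ C := by
      rw [sdiff_inter_right_comm, inter_sdiff_assoc, sdiff_eq_self_of_disjoint hBC.symm]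
    rw [← hC, ← sup_eq_union, ← sdiff_sdiff_left, card_sdiff_add_card_inter]
  have hT := sdiff_split h
  have hA := sdiff_split h.symm
  rw [union_comm A T, sum_card_neighborFinset_inter_comm] at hA
  rw [cutSize, sum_union h]
  omega

lemma card_neighborFinset_sdiff_lt_degree {T : Finset V} {x z : V} (hz : z ∈ T) (hxz : G.Adj x z) :
    #(G.neighborFinset x \ T) < G.degree x :=
  card_lt_card <| (ssubset_iff_of_subset sdiff_subset).2
    ⟨z, (G.mem_neighborFinset x z).2 hxz, by simp [hz]⟩

lemma degree_lt_card_add_card_neighborFinset_sdiff {B : Finset V} {u : V} (hu : u ∈ B) :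
    G.degree u < #B + #(G.neighborFinset u \ B) := by
  have hinter : G.neighborFinset u ∩ B ⊂ B :=
    (ssubset_iff_of_subset inter_subset_right).2 ⟨u, hu, by simp⟩
  have := card_lt_card hinter
  rw [← G.card_neighborFinset_eq_degree, ← card_sdiff_add_card_inter (G.neighborFinset u) B]
  omega

lemma cutSize_pos [Infinite V] (hG : G.Preconnected) {A : Finset V} (hA : A.Nonempty) :
    0 < cutSize G A := by
  obtain ⟨a, ha⟩ := hA
  obtain ⟨z, hz⟩ := Infinite.exists_notMem_finset A
  obtain ⟨p⟩ := hG a z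
  obtain ⟨d, -, hfst, hsnd⟩ := p.exists_boundary_dart (A : Set V) ha hz
  exact sum_pos' (fun _ _ ↦ zero_le) ⟨d.fst, hfst, card_pos.2 ⟨d.snd, by simpa [d.adj] using hsnd⟩⟩

lemma card_neighborFinset_sdiff_map (f : G ≃g H) (x : V) (A : Finset V) :
    #(H.neighborFinset (f x) \ A.map f.toEquiv.toEmbedding) = #(G.neighborFinset x \ A) := by
  rw [← map_neighborFinset, ← Finset.map_sdiff, card_map]

lemma cutSize_map (f : G ≃g H) (A : Finset V) :
    cutSize H (A.map f.toEquiv.toEmbedding) = cutSize G A := by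
  rw [cutSize, sum_map]
  exact sum_congr rfl fun x _ ↦ card_neighborFinset_sdiff_map f x A

end CutSize

section EdgeAtom

variable {V : Type*} [DecidableEq V] {G : SimpleGraph V} [G.LocallyFinite]

variable (G) in
/-- A finite nonempty vertex set with the fewest boundary edges and, among those, with the fewest
vertices: an atom in the sense of Mader, for edge connectivity. -/
structure IsEdgeAtom (B : Finset V) : Prop where
  nonempty : B.Nonempty
  cutSize_le ⦃C : Finset V⦄ : C.Nonempty → cutSize G B ≤ cutSize G C
  card_le ⦃C : Finset V⦄ : C.Nonempty → cutSize G C ≤ cutSize G B → #B ≤ #C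

variable (G) in
lemma exists_isEdgeAtom [Nonempty V] : ∃ B, IsEdgeAtom G B := by
  obtain ⟨B, hB, hmin⟩ := exists_minimalFor_of_wellFoundedLT (Finset.Nonempty (α := V))
    (fun B ↦ toLex (cutSize G B, #B)) ⟨{Classical.arbitrary V}, singleton_nonempty _⟩
  have hle {C : Finset V} (hC : C.Nonempty) :
      cutSize G B < cutSize G C ∨ cutSize G B = cutSize G C ∧ #B ≤ #C :=
    Prod.Lex.toLex_le_toLex.1 (le_of_not_gt fun h ↦ h.not_ge (hmin hC h.le))
  exact ⟨B, hB, fun _ hC ↦ by grind, fun _ hC h ↦ by grind⟩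

namespace IsEdgeAtom

variable {A B : Finset V}

lemma map (hB : IsEdgeAtom G B) (γ : G ≃g G) : IsEdgeAtom G (B.map γ.toEquiv.toEmbedding) where
  nonempty := hB.nonempty.map
  cutSize_le _ hC := (cutSize_map γ B).trans_le (hB.cutSize_le hC)
  card_le _ hC h := (card_map _).trans_le (hB.card_le hC (h.trans_eq (cutSize_map γ B)))

lemma subset_of_inter_nonempty (hA : IsEdgeAtom G A) (hB : IsEdgeAtom G B)
    (h : (A ∩ B).Nonempty) : A ⊆ B := by
  have hcut : cutSize G (A ∩ B) ≤ cutSize G A := by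
    have hunion := hB.cutSize_le (hB.nonempty.mono (subset_union_right (s₁ := A)))
    have hsubmod := cutSize_union_add_cutSize_inter_le (G := G) A B
    omega
  exact inter_eq_left.1 (eq_of_subset_of_card_le inter_subset_left (hA.card_le h hcut))

lemma eq_of_inter_nonempty (hA : IsEdgeAtom G A) (hB : IsEdgeAtom G B)
    (h : (A ∩ B).Nonempty) : A = B :=
  (hA.subset_of_inter_nonempty hB h).antisymm
    (hB.subset_of_inter_nonempty hA (inter_comm A B ▸ h))

lemma card_neighborFinset_sdiff_eq (htrans : ∀ v w : V, ∃ γ : G ≃g G, γ v = w)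
    (hB : IsEdgeAtom G B) {u w : V} (hu : u ∈ B) (hw : w ∈ B) :
    #(G.neighborFinset w \ B) = #(G.neighborFinset u \ B) := by
  obtain ⟨γ, rfl⟩ := htrans u w
  have hγB : B.map γ.toEquiv.toEmbedding = B :=
    (hB.map γ).eq_of_inter_nonempty hB ⟨γ u, mem_inter.2 ⟨mem_map_of_mem _ hu, hw⟩⟩
  conv_lhs => rw [← hγB]
  exact card_neighborFinset_sdiff_map γ u B

end IsEdgeAtom

theorem degree_le_cutSize [Infinite V] (hG : G.Preconnected)
    (htrans : ∀ v w : V, ∃ γ : G ≃g G, γ v = w) (v : V) {A : Finset V} (hA : A.Nonempty) :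
    G.degree v ≤ cutSize G A := by
  obtain ⟨B, hB⟩ := exists_isEdgeAtom G
  obtain ⟨u, hu⟩ := hB.nonempty
  obtain ⟨γ, rfl⟩ := htrans u v
  set s := #(G.neighborFinset u \ B)
  have hcutB : cutSize G B = #B * s :=
    sum_const_nat fun w hw ↦ hB.card_neighborFinset_sdiff_eq htrans hu hw
  have hs_pos : 0 < s := pos_of_mul_pos_right (hcutB ▸ cutSize_pos hG hB.nonempty) zero_le
  have hadd_le : #B + s ≤ #B * s + 1 := by nlinarith [hB.nonempty.card_pos]
  calc G.degree (γ u) = G.degree u := γ.degree_eq u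
    _ ≤ #B * s := Nat.le_of_lt_succ <|
      (degree_lt_card_add_card_neighborFinset_sdiff hu).trans_le hadd_le
    _ = cutSize G B := hcutB.symm
    _ ≤ cutSize G A := hB.cutSize_le hA

end EdgeAtom

section Filled

variable {V : Type*} [DecidableEq V] {G : SimpleGraph V} [G.LocallyFinite]

variable (G) in
/-- The complement of `T` has no finite component: every finite nonempty set outside `T` has a
neighbor outside itself and `T`. The walk will keep its past inside such a set, so that it always
has room to continue. -/
def IsFilled (T : Finset V) : Prop :=
  ∀ ⦃A : Finset V⦄, A.Nonempty → Disjoint T A → ∃ a ∈ A, ¬ G.neighborFinset a ⊆ T ∪ A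

lemma isFilled_empty (hpos : ∀ A : Finset V, A.Nonempty → 0 < cutSize G A) : IsFilled G ∅ := by
  intro A hA _
  obtain ⟨a, ha, hne⟩ := exists_ne_zero_of_sum_ne_zero (hpos A hA).ne'
  exact ⟨a, ha, by simpa [sdiff_eq_empty_iff_subset] using hne⟩

lemma exists_isFilled_superset (hpos : ∀ A : Finset V, A.Nonempty → 0 < cutSize G A)
    (T : Finset V) :
    ∃ T', T ⊆ T' ∧ IsFilled G T' ∧ ∀ y ∈ T' \ T, G.neighborFinset y ⊆ T' := by
  obtain ⟨T', ⟨hT, hclosed⟩, hmin⟩ := exists_minimalFor_of_wellFoundedLT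
    (fun T' ↦ T ⊆ T' ∧ ∀ y ∈ T' \ T, G.neighborFinset y ⊆ T') (cutSize G) ⟨T, by simp⟩
  refine ⟨T', hT, fun A hA hdisj ↦ ?_, hclosed⟩
  -- Absorbing a set `A` without exits would remove all `cutSize G A > 0` boundary edges of `A`.
  by_contra! hA_closed
  have hle : cutSize G T' ≤ cutSize G (T' ∪ A) := by
    refine not_lt.1 fun hlt ↦ hlt.not_ge <|
      hmin ⟨hT.trans subset_union_left, fun y hy ↦ ?_⟩ hlt.le
    obtain ⟨hy, hyT⟩ := Finset.mem_sdiff.1 hy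
    obtain hy | hy := mem_union.1 hy
    · exact (hclosed y (Finset.mem_sdiff.2 ⟨hy, hyT⟩)).trans subset_union_left
    · exact hA_closed y hy
  have hcut := cutSize_union_add_cutSize (G := G) hdisj
  have hno_exit : ∑ a ∈ A, #(G.neighborFinset a \ (T' ∪ A)) = 0 :=
    sum_eq_zero fun a ha ↦ card_eq_zero.2 (sdiff_eq_empty_iff_subset.2 (hA_closed a ha))
  have := hpos A hA
  omega

lemma IsFilled.exists_insert_superset (hpos : ∀ A : Finset V, A.Nonempty → 0 < cutSize G A)
    {T : Finset V} (hT : IsFilled G T) {x : V} (hx : x ∉ T) :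
    ∃ T', insert x T ⊆ T' ∧ IsFilled G T' ∧ (G.neighborFinset x \ T').Nonempty ∧
      cutSize G T' + cutSize G (T' \ T) = cutSize G T + 2 * #(G.neighborFinset x \ T') := by
  obtain ⟨T', hsub, hfilled, hclosed⟩ := exists_isFilled_superset hpos (insert x T)
  refine ⟨T', hsub, hfilled, ?_⟩
  obtain ⟨hxT', hTT'⟩ := insert_subset_iff.1 hsub
  have hunion : T ∪ T' \ T = T' := union_sdiff_of_subset hTT'
  have hx_new : x ∈ T' \ T := Finset.mem_sdiff.2 ⟨hxT', hx⟩
  have hclosed_of_ne {a : V} (ha : a ∈ T' \ T) (hax : a ≠ x) : G.neighborFinset a ⊆ T' :=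
    hclosed a (by grind)
  constructor
  · obtain ⟨a, ha, hexit⟩ := hT ⟨x, hx_new⟩ disjoint_sdiff
    rw [hunion] at hexit
    obtain rfl : a = x := by_contra fun hax ↦ hexit (hclosed_of_ne ha hax)
    exact sdiff_nonempty.2 hexit
  · have hcut := cutSize_union_add_cutSize (G := G) (disjoint_sdiff (s := T) (t := T'))
    rwa [hunion, sum_eq_single_of_mem x hx_new fun a ha hax ↦ card_eq_zero.2
      (sdiff_eq_empty_iff_subset.2 (hclosed_of_ne ha hax))] at hcut

end Filled

section AvoidingWalks

variable {V : Type*} {G : SimpleGraph V}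

variable (G) in
/-- The `n`-step self-avoiding walks in `G` that start at `x` and visit no vertex of `T`. -/
abbrev AvoidingSaw (T : Set V) (x : V) (n : ℕ) : Type _ :=
  {p : Σ w : V, G.Walk x w // p.2.IsPath ∧ p.2.length = n ∧ ∀ u ∈ p.2.support, u ∉ T}

variable (G) in
lemma finite_setOf_walk_length_eq [G.LocallyFinite] (n : ℕ) (x : V) :
    {p : Σ w : V, G.Walk x w | p.2.length = n}.Finite := by
  induction n generalizing x with
  | zero =>
    refine (Set.finite_singleton ⟨x, SimpleGraph.Walk.nil⟩).subset ?_
    rintro ⟨_, _ | _⟩ hp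
    · rfl
    · simp at hp
  | succ n ih =>
    have hcons := Set.finite_iUnion fun y : G.neighborSet x ↦ (ih y).image fun q ↦
      (⟨q.1, .cons y.2 q.2⟩ : Σ w : V, G.Walk x w)
    refine hcons.subset ?_
    rintro ⟨w, _ | ⟨h, p⟩⟩ hp
    · simp at hp
    · exact Set.mem_iUnion.2 ⟨⟨_, h⟩, ⟨w, p⟩, by simpa using hp, rfl⟩

instance AvoidingSaw.instFinite [G.LocallyFinite] (T : Set V) (x : V) (n : ℕ) :
    Finite (AvoidingSaw G T x n) :=
  ((finite_setOf_walk_length_eq G n x).subset fun _ hp ↦ hp.2.1).to_subtype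

lemma card_avoidingSaw_empty (x : V) (n : ℕ) :
    Nat.card (AvoidingSaw G ∅ x n) = sawCount G x n := by
  simp [AvoidingSaw, sawCount]

namespace AvoidingSaw

variable {T T' : Set V} {x y : V} {n : ℕ}

/-- The walk `p` preceded by the step from `x ∈ T' \ T` to its starting vertex. -/
def cons (hT : T ⊆ T') (hx : x ∈ T' \ T) (hxy : G.Adj x y) (p : AvoidingSaw G T' y n) :
    AvoidingSaw G T x (n + 1) :=
  ⟨⟨p.1.1, .cons hxy p.1.2⟩, by
    obtain ⟨⟨w, p⟩, hpath, hlen, hsupp⟩ := p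
    refine ⟨(p.cons_isPath_iff hxy).2 ⟨hpath, fun h ↦ hsupp x h hx.1⟩, by simpa using hlen, ?_⟩
    simpa using ⟨hx.2, fun u hu huT ↦ hsupp u hu (hT huT)⟩⟩

lemma sum_card_le [G.LocallyFinite] (hT : T ⊆ T') (hx : x ∈ T' \ T) :
    ∑ y ∈ G.neighborFinset x, Nat.card (AvoidingSaw G T' y n) ≤
      Nat.card (AvoidingSaw G T x (n + 1)) := by
  rw [← sum_coe_sort, ← Nat.card_sigma]
  refine Nat.card_le_card_of_injective
    (fun p : Σ y : G.neighborFinset x, AvoidingSaw G T' y n ↦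
      p.2.cons hT hx ((G.mem_neighborFinset x p.1).1 p.1.2)) ?_
  rintro ⟨⟨y, hy⟩, ⟨w, p⟩, hp⟩ ⟨⟨y', hy'⟩, ⟨w', p'⟩, hp'⟩ h
  simp only [cons, Subtype.mk.injEq, Sigma.mk.injEq] at h
  obtain ⟨rfl, h⟩ := h
  obtain ⟨rfl, h⟩ := SimpleGraph.Walk.cons.injEq .. ▸ eq_of_heq h
  obtain rfl := eq_of_heq h
  rfl

end AvoidingSaw

end AvoidingWalks

section Growth

variable {V : Type*} {G : SimpleGraph V} [G.LocallyFinite] {m : ℕ}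

lemma exists_one_le_pow_eq_sqrt (m : ℕ) :
    ∃ r : ℝ, 1 ≤ r ∧ r ^ m = √(m + 1) ∧ ∀ k ≤ m, r ^ (2 * k) ≤ k + 1 := by
  obtain rfl | hm := m.eq_zero_or_pos
  · exact ⟨1, le_rfl, by simp, by simp⟩
  have hm' : (0 : ℝ) < m := mod_cast hm
  have hpow (j : ℕ) :
      ((1 + m : ℝ) ^ ((1 : ℝ) / (2 * m))) ^ j = (1 + m : ℝ) ^ (j / (2 * m) : ℝ) := by
    rw [← Real.rpow_mul_natCast (by positivity)]
    congr 1; ring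
  refine ⟨(1 + m : ℝ) ^ ((1 : ℝ) / (2 * m)), Real.one_le_rpow (by linarith) (by positivity), ?_,
    fun k hk ↦ ?_⟩
  · rw [hpow, Real.sqrt_eq_rpow, add_comm]
    congr 1; field_simp
  · have hkm : (k / m : ℝ) ≤ 1 := div_le_one_of_le₀ (mod_cast hk) hm'.le
    calc ((1 + m : ℝ) ^ ((1 : ℝ) / (2 * m))) ^ (2 * k) = (1 + m : ℝ) ^ (k / m : ℝ) := by
          rw [hpow]; congr 1; push_cast; field_simp
      _ ≤ 1 + k / m * m :=
          rpow_one_add_le_one_add_mul_self (by linarith) (by positivity) hkm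
      _ = k + 1 := by field_simp; ring

lemma IsFilled.exists_step [DecidableEq V] (hreg : G.IsRegularOfDegree (m + 2))
    (hcut : ∀ A : Finset V, A.Nonempty → m + 2 ≤ cutSize G A)
    {T : Finset V} (hT : IsFilled G T) {x z : V} (hx : x ∉ T) (hz : z ∈ T) (hxz : G.Adj x z) :
    ∃ T' k, T ⊆ T' ∧ x ∈ T' ∧ IsFilled G T' ∧ #(G.neighborFinset x \ T') = k + 1 ∧ k ≤ m ∧
      m + cutSize G T' ≤ cutSize G T + 2 * k := by
  obtain ⟨T', hsub, hT', hexit, hcutT'⟩ :=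
    hT.exists_insert_superset (fun A hA ↦ (Nat.succ_pos _).trans_le (hcut A hA)) hx
  obtain ⟨hxT', hTT'⟩ := insert_subset_iff.1 hsub
  obtain ⟨k, hk⟩ := Nat.exists_eq_add_of_le' hexit.card_pos
  have hlt := card_neighborFinset_sdiff_lt_degree (hTT' hz) hxz
  have hcut_new := hcut (T' \ T) ⟨x, Finset.mem_sdiff.2 ⟨hxT', hx⟩⟩
  rw [hreg x] at hlt
  exact ⟨T', k, hTT', hxT', hT', hk, by omega, by omega⟩

-- The factor `r ^ cutSize G T` is the potential of the induction: a step with `k + 1` exits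
-- multiplies the count by `k + 1 ≥ r ^ (2 * k)` and the potential by at most `r ^ (2 * k - m)`.
lemma pow_le_pow_cutSize_mul_card_avoidingSaw [DecidableEq V] (hreg : G.IsRegularOfDegree (m + 2))
    (hcut : ∀ A : Finset V, A.Nonempty → m + 2 ≤ cutSize G A)
    {r : ℝ} (hr : 1 ≤ r) (hr_le : ∀ k ≤ m, r ^ (2 * k) ≤ k + 1) (n : ℕ)
    {T : Finset V} (hT : IsFilled G T) {x z : V} (hx : x ∉ T) (hz : z ∈ T) (hxz : G.Adj x z) :
    r ^ (m * n) ≤ r ^ cutSize G T * Nat.card (AvoidingSaw G T x n) := by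
  induction n generalizing T x z with
  | zero =>
    have : Nonempty (AvoidingSaw G T x 0) := ⟨⟨x, .nil⟩, by simpa using hx⟩
    have hcard : (1 : ℝ) ≤ Nat.card (AvoidingSaw G T x 0) := mod_cast Nat.card_pos
    simpa using one_le_mul_of_one_le_of_one_le (one_le_pow₀ hr) hcard
  | succ n ih =>
    obtain ⟨T', k, hTT', hxT', hT', hk, hkm, hgrowth⟩ := hT.exists_step hreg hcut hx hz hxz
    have hsum : ∑ y ∈ G.neighborFinset x \ T', Nat.card (AvoidingSaw G T' y n) ≤
        Nat.card (AvoidingSaw G T x (n + 1)) :=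
      (sum_le_sum_of_subset sdiff_subset).trans
        (AvoidingSaw.sum_card_le (mod_cast hTT') ⟨mod_cast hxT', mod_cast hx⟩)
    refine le_of_mul_le_mul_left ?_ (by positivity : (0 : ℝ) < k + 1)
    calc (k + 1) * r ^ (m * (n + 1))
        = r ^ m * ∑ _y ∈ G.neighborFinset x \ T', r ^ (m * n) := by
          rw [sum_const, hk, nsmul_eq_mul]; push_cast; ring
      _ ≤ r ^ m * ∑ y ∈ G.neighborFinset x \ T',
            r ^ cutSize G T' * Nat.card (AvoidingSaw G T' y n) := by
          gcongr with y hy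
          rw [Finset.mem_sdiff, G.mem_neighborFinset] at hy
          exact ih hT' hy.2 hxT' hy.1.symm
      _ = r ^ (m + cutSize G T') *
            (∑ y ∈ G.neighborFinset x \ T', Nat.card (AvoidingSaw G T' y n) : ℕ) := by
          rw [← mul_sum]; push_cast; ring
      _ ≤ r ^ (cutSize G T + 2 * k) * Nat.card (AvoidingSaw G T x (n + 1)) := by gcongr
      _ = r ^ (2 * k) * (r ^ cutSize G T * Nat.card (AvoidingSaw G T x (n + 1))) := by ring
      _ ≤ (k + 1) * (r ^ cutSize G T * Nat.card (AvoidingSaw G T x (n + 1))) := by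
          gcongr
          exact hr_le k hkm

theorem sqrt_pow_isBigO_sawCount [DecidableEq V] (hreg : G.IsRegularOfDegree (m + 2))
    (hcut : ∀ A : Finset V, A.Nonempty → m + 2 ≤ cutSize G A) (v : V) :
    (fun n : ℕ ↦ √(m + 1) ^ n) =O[atTop] fun n ↦ (sawCount G v n : ℝ) := by
  obtain ⟨r, hr, hr_sqrt, hr_le⟩ := exists_one_le_pow_eq_sqrt m
  have hpos (A : Finset V) (hA : A.Nonempty) : 0 < cutSize G A :=
    (Nat.succ_pos _).trans_le (hcut A hA)
  obtain ⟨T, hsub, hT, ⟨y, hy⟩, -⟩ := (isFilled_empty hpos).exists_insert_superset hpos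
    (notMem_empty v)
  have hvT : v ∈ T := hsub (mem_insert_self v ∅)
  rw [Finset.mem_sdiff] at hy
  have hcard (n : ℕ) : Nat.card (AvoidingSaw G T y n) ≤ sawCount G v (n + 1) := by
    rw [← card_avoidingSaw_empty]
    exact (single_le_sum (f := fun y ↦ Nat.card (AvoidingSaw G T y n)) (by simp) hy.1).trans
      (AvoidingSaw.sum_card_le (Set.empty_subset _) ⟨hvT, Set.notMem_empty v⟩)
  refine .of_bound (r ^ m * r ^ cutSize G T) ?_
  filter_upwards [eventually_ge_atTop 1] with n hn
  obtain ⟨n, rfl⟩ := Nat.exists_eq_add_of_le' hn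
  rw [Real.norm_of_nonneg (by positivity), Real.norm_natCast]
  calc √(m + 1) ^ (n + 1) = r ^ m * r ^ (m * n) := by rw [← hr_sqrt]; ring
    _ ≤ r ^ m * (r ^ cutSize G T * Nat.card (AvoidingSaw G T y n)) := by
      gcongr
      exact pow_le_pow_cutSize_mul_card_avoidingSaw hreg hcut hr hr_le n hT hy.2 hvT
        ((G.mem_neighborFinset v y).1 hy.1).symm
    _ ≤ r ^ m * r ^ cutSize G T * sawCount G v (n + 1) := by
      rw [mul_assoc]
      gcongr
      exact hcard n

lemma le_of_pow_isBigO_of_tendsto_root {a : ℕ → ℝ} {c μ : ℝ} (ha : ∀ n, 0 ≤ a n)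
    (h : (fun n : ℕ ↦ c ^ n) =O[atTop] a)
    (hμ : Tendsto (fun n : ℕ ↦ a n ^ ((1 : ℝ) / n)) atTop (nhds μ)) : c ≤ μ := by
  obtain ⟨C, hC, hbound⟩ := h.exists_pos
  have hroot : Tendsto (fun n : ℕ ↦ C ^ ((1 : ℝ) / n)) atTop (nhds 1) := by
    simpa using (tendsto_const_nhds (x := C)).rpow tendsto_one_div_atTop_nhds_zero_nat
      (.inl hC.ne')
  refine (le_abs_self c).trans (ge_of_tendsto (by simpa only [one_mul] using hroot.mul hμ) ?_)
  filter_upwards [hbound.bound, eventually_ne_atTop 0] with n hn hn0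
  rw [norm_pow, Real.norm_eq_abs, Real.norm_of_nonneg (ha n)] at hn
  calc |c| = (|c| ^ n) ^ ((1 : ℝ) / n) := by
        rw [one_div, Real.pow_rpow_inv_natCast (abs_nonneg c) hn0]
    _ ≤ (C * a n) ^ ((1 : ℝ) / n) := by gcongr
    _ = C ^ ((1 : ℝ) / n) * a n ^ ((1 : ℝ) / n) := Real.mul_rpow hC.le (ha n)

end Growth

/-- For an infinite, connected, `Δ`-regular, vertex-transitive simple graph with `Δ ≥ 2`,
the connective constant satisfies `μ ≥ √(Δ−1)`. -/
theorem connective_constant_lower_bound {V : Type*} (G : SimpleGraph V) [Infinite V]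
    (Δ : ℕ) (hΔ : 2 ≤ Δ)
    (hconn : G.Connected)
    (hreg : ∀ v : V, (G.neighborSet v).ncard = Δ)
    (htrans : ∀ v w : V, ∃ γ : G ≃g G, γ v = w)
    (v : V) (μ : ℝ)
    (hμ : Tendsto (fun n : ℕ => (sawCount G v n : ℝ) ^ ((1 : ℝ) / n)) atTop (nhds μ)) :
    Real.sqrt ((Δ : ℝ) - 1) ≤ μ := by
  classical
  obtain ⟨m, rfl⟩ := Nat.exists_eq_add_of_le' hΔ
  let _ : G.LocallyFinite := fun x ↦
    (Set.finite_of_ncard_pos (by rw [hreg x]; omega)).fintype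
  have hdeg : G.IsRegularOfDegree (m + 2) := fun x ↦ by
    rw [← hreg x, ← Nat.card_coe_set_eq, Nat.card_eq_fintype_card, G.card_neighborSet_eq_degree]
  have hcut (A : Finset V) (hA : A.Nonempty) : m + 2 ≤ cutSize G A :=
    hdeg v ▸ degree_le_cutSize hconn.preconnected htrans v hA
  have hgrowth := sqrt_pow_isBigO_sawCount hdeg hcut v
  have hsqrt : ((m + 2 : ℕ) : ℝ) - 1 = m + 1 := by push_cast; ring
  rw [hsqrt]
  exact le_of_pow_isBigO_of_tendsto_root (fun n ↦ (sawCount G v n).cast_nonneg) hgrowth hμ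
end
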